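/- arXiv:2102.04200 — 4 statements merged into one kernel-verified Lean document; each statement's English description precedes it below -/
import Mathlib

section
/- Let X be a discrete random variable taking values in the lattice {x₀ + kΔ : k ∈ ℤ} for some x₀ ∈ ℝ and Δ > 0, and let U be a continuous real random variable, independent of X, whose support is contained in an interval of length at most Δ. Then for every α > 0 (including the Shannon case α = 1), H_α(X) = h_α(X + U) − h_α(U), whenever these quantities are defined. In particular, if U is uniformly distributed on an interval of length Δ, then H_α(X) = h_α(X + U) − ln Δ. -/
/-!
Conditioning on `X` shows that `X + U` has density `∑ₖ pₖ χ(x - cₖ)`, where `cₖ` are the values of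
`X` and `pₖ` their probabilities. When the translates of the support of `χ` do not overlap, at most
one term is nonzero at almost every `x`, so `∫ Φ ∘ f = ∑ₖ ∫ Φ(pₖ χ(u)) du` for every `Φ` with
`Φ 0 = 0`. For `Φ t = t ^ α` the right-hand side is `(∑ₖ pₖ ^ α) ∫ χ ^ α`, and for
`Φ t = -t log t` it is `∑ₖ Φ(pₖ) + ∫ Φ ∘ χ`.
-/

open MeasureTheory Real

/-- Discrete Rényi entropy of order `α` (Shannon entropy when `α = 1`),
with natural logarithms. -/
noncomputable def discreteRenyiEntropy (α : ℝ) (p : ℤ → ℝ) : ℝ :=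
  if α = 1 then ∑' k, p k * Real.log (1 / p k)
  else (1 / (1 - α)) * Real.log (∑' k, p k ^ α)

/-- Differential Rényi entropy of order `α` (differential entropy when `α = 1`)
of a density `f` on `ℝ`, with natural logarithms. -/
noncomputable def diffRenyiEntropy (α : ℝ) (f : ℝ → ℝ) : ℝ :=
  if α = 1 then ∫ x, f x * Real.log (1 / f x)
  else (1 / (1 - α)) * Real.log (∫ x, f x ^ α)

section DisjointSupports

variable {α E F ι : Type*} [MeasurableSpace α] {μ : Measure α} [Countable ι]
  [AddCommMonoid E] {g : ι → α → E}

lemma ae_subsingleton_support_of_aedisjoint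
    (hdisj : Pairwise (Function.onFun (AEDisjoint μ) fun k => Function.support (g k))) :
    ∀ᵐ x ∂μ, (Function.support fun k => g k x).Subsingleton := by
  have hoverlap : ∀ᵐ x ∂μ, ∀ j k, j ≠ k → ¬(g j x ≠ 0 ∧ g k x ≠ 0) := by
    simp only [ae_all_iff]
    exact fun j k hjk => measure_eq_zero_iff_ae_notMem.1 (hdisj hjk)
  filter_upwards [hoverlap] with x hx j hj k hk
  exact not_imp_comm.1 (hx j k) (not_not.2 ⟨hj, hk⟩)

variable [TopologicalSpace E] [NormedAddCommGroup F] {Φ : E → F}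

lemma indicator_support_comp_tsum_ae_eq
    (hdisj : Pairwise (Function.onFun (AEDisjoint μ) fun k => Function.support (g k)))
    (hΦ : Φ 0 = 0) (k : ι) :
    (Function.support (g k)).indicator (fun x => Φ (∑' j, g j x)) =ᵐ[μ] fun x => Φ (g k x) := by
  filter_upwards [ae_subsingleton_support_of_aedisjoint hdisj] with x hx
  by_cases hk : g k x = 0
  · simp [hk, hΦ]
  · have hsum : ∑' j, g j x = g k x := tsum_eq_single k fun j hj => by
      contrapose! hj
      exact hx hj hk
    rw [Set.indicator_of_mem hk, hsum]

lemma integrable_comp_of_integrable_comp_tsum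
    (hg : ∀ k, NullMeasurableSet (Function.support (g k)) μ)
    (hdisj : Pairwise (Function.onFun (AEDisjoint μ) fun k => Function.support (g k)))
    (hΦ : Φ 0 = 0) (hint : Integrable (fun x => Φ (∑' k, g k x)) μ) (k : ι) :
    Integrable (fun x => Φ (g k x)) μ :=
  (hint.indicator₀ (hg k)).congr (indicator_support_comp_tsum_ae_eq hdisj hΦ k)

lemma hasSum_integral_comp_of_aedisjoint [NormedSpace ℝ F]
    (hg : ∀ k, NullMeasurableSet (Function.support (g k)) μ)
    (hdisj : Pairwise (Function.onFun (AEDisjoint μ) fun k => Function.support (g k)))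
    (hΦ : Φ 0 = 0) (hint : Integrable (fun x => Φ (∑' k, g k x)) μ) :
    HasSum (fun k => ∫ x, Φ (g k x) ∂μ) (∫ x, Φ (∑' k, g k x) ∂μ) := by
  have hunion := hasSum_integral_iUnion_ae hg hdisj hint.integrableOn
  rw [setIntegral_eq_integral_of_forall_compl_eq_zero] at hunion
  · refine hunion.congr_fun fun k => ?_
    rw [← integral_indicator₀ (hg k)]
    exact integral_congr_ae (indicator_support_comp_tsum_ae_eq hdisj hΦ k).symm
  · intro x hx
    have hzero : ∀ k, g k x = 0 := by simpa using hx
    simp [hzero, hΦ]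

end DisjointSupports

section Density

variable {α : Type*} [MeasurableSpace α] {μ : Measure α} {f : α → ℝ}

lemma integral_eq_one_of_map_eq_withDensity {Ω : Type*} [MeasurableSpace Ω] {P : Measure Ω}
    [IsProbabilityMeasure P] {Y : Ω → α} (hY : AEMeasurable Y P) (hfm : Measurable f)
    (hf0 : ∀ x, 0 ≤ f x) (hf : P.map Y = μ.withDensity fun x => ENNReal.ofReal (f x)) :
    ∫ x, f x ∂μ = 1 := by
  have hmass : ∫⁻ x, ENNReal.ofReal (f x) ∂μ = 1 := by
    rw [← setLIntegral_univ, ← withDensity_apply _ MeasurableSet.univ, ← hf]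
    exact (Measure.isProbabilityMeasure_map hY).measure_univ
  rw [integral_eq_lintegral_of_nonneg_ae (ae_of_all _ hf0) hfm.aestronglyMeasurable, hmass,
    ENNReal.toReal_one]

lemma integral_rpow_pos {s : ℝ} (hs : s ≠ 0) (hf0 : ∀ x, 0 ≤ f x) (hf : 0 < ∫ x, f x ∂μ)
    (hint : Integrable (fun x => f x ^ s) μ) : 0 < ∫ x, f x ^ s ∂μ := by
  have hsupp : Function.support (fun x => f x ^ s) = Function.support f := by
    ext x
    simp [Real.rpow_eq_zero (hf0 x) hs]
  rwa [integral_pos_iff_support_of_nonneg (fun x => Real.rpow_nonneg (hf0 x) s) hint, hsupp,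
    ← integral_pos_iff_support_of_nonneg hf0 (.of_integral_ne_zero hf.ne')]

end Density

section LawOfSum

variable {Ω G ι : Type*} [MeasurableSpace Ω] [MeasurableSpace G]

lemma map_const_add_withDensity [AddGroup G] [MeasurableAdd G] {μ : Measure G}
    [μ.IsAddLeftInvariant] {h : G → ENNReal} (hh : Measurable h) (a : G) :
    (μ.withDensity h).map (fun u => a + u) = μ.withDensity fun x => h (-a + x) := by
  ext s hs
  have hsubst : ∫⁻ u in (fun u => a + u) ⁻¹' s, h (-a + (a + u)) ∂μ
      = ∫⁻ x in s, h (-a + x) ∂μ :=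
    (measurePreserving_add_left μ a).setLIntegral_comp_preimage hs
      (hh.comp (measurable_const_add (-a)))
  rw [Measure.map_apply (measurable_const_add a) hs,
    withDensity_apply _ (measurable_const_add a hs), withDensity_apply _ hs, ← hsubst]
  simp only [neg_add_cancel_left]

variable {P : Measure Ω} [MeasurableSingletonClass G] [Countable ι] {X U : Ω → G} {c : ι → G}

lemma map_add_eq_sum_smul_map [Add G] [MeasurableAdd₂ G] (hX : Measurable X) (hU : Measurable U)
    (hind : ProbabilityTheory.IndepFun X U P) (hc : Function.Injective c)
    (hXc : ∀ᵐ ω ∂P, X ω ∈ Set.range c) :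
    P.map (fun ω => X ω + U ω)
      = Measure.sum fun k => P (X ⁻¹' {c k}) • (P.map U).map (fun u => c k + u) := by
  ext s hs
  let A : ι → Set Ω := fun k => X ⁻¹' {c k} ∩ U ⁻¹' ((fun u => c k + u) ⁻¹' s)
  have hshift (k : ι) : MeasurableSet ((fun u => c k + u) ⁻¹' s) := measurable_const_add (c k) hs
  have hA (k : ι) : MeasurableSet (A k) :=
    (hX (measurableSet_singleton _)).inter (hU (hshift k))
  have hpartition : (fun ω => X ω + U ω) ⁻¹' s =ᵐ[P] ⋃ k, A k := by
    filter_upwards [hXc] with ω ⟨j, hj⟩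
    refine propext ?_
    change X ω + U ω ∈ s ↔ ω ∈ ⋃ k, A k
    simp [A, ← hj, hc.eq_iff]
  have hdisj : Pairwise (Function.onFun Disjoint A) := fun j k hjk =>
    ((Set.disjoint_singleton.2 (hc.ne hjk)).preimage X).mono Set.inter_subset_left
      Set.inter_subset_left
  calc P.map (fun ω => X ω + U ω) s = P (⋃ k, A k) := by
        rw [Measure.map_apply (by fun_prop) hs, measure_congr hpartition]
    _ = ∑' k, P (A k) := measure_iUnion hdisj hA
    _ = ∑' k, P (X ⁻¹' {c k}) * (P.map U).map (fun u => c k + u) s := by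
        refine tsum_congr fun k => ?_
        rw [hind.measure_inter_preimage_eq_mul _ _ (measurableSet_singleton _) (hshift k),
          Measure.map_apply (measurable_const_add (c k)) hs, Measure.map_apply hU (hshift k)]
    _ = _ := by simp only [Measure.sum_apply _ hs, Measure.smul_apply, smul_eq_mul]

lemma ae_eq_tsum_of_map_add_eq_withDensity [AddCommGroup G] [MeasurableAdd₂ G] {μ : Measure G}
    [μ.IsAddLeftInvariant] [IsFiniteMeasure P] (hX : Measurable X) (hU : Measurable U)
    (hind : ProbabilityTheory.IndepFun X U P) (hc : Function.Injective c)
    (hXc : ∀ᵐ ω ∂P, X ω ∈ Set.range c) {χ f : G → ℝ}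
    (hχm : Measurable χ) (hχ0 : ∀ x, 0 ≤ χ x)
    (hχ : P.map U = μ.withDensity fun x => ENNReal.ofReal (χ x))
    (hfm : Measurable f) (hf0 : ∀ x, 0 ≤ f x)
    (hf : P.map (fun ω => X ω + U ω) = μ.withDensity fun x => ENNReal.ofReal (f x)) :
    f =ᵐ[μ] fun x => ∑' k, P.real (X ⁻¹' {c k}) * χ (x - c k) := by
  let g : ι → G → ENNReal := fun k x => P (X ⁻¹' {c k}) * ENNReal.ofReal (χ (-c k + x))
  have hχc (k : ι) : Measurable fun x => ENNReal.ofReal (χ (-c k + x)) := by fun_prop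
  have hgm (k : ι) : Measurable (g k) := (hχc k).const_mul _
  have hmixture : μ.withDensity (fun x => ENNReal.ofReal (f x)) = μ.withDensity (∑' k, g k) := by
    rw [← hf, map_add_eq_sum_smul_map hX hU hind hc hXc, withDensity_tsum hgm]
    congr 1 with k : 1
    rw [hχ, map_const_add_withDensity hχm.ennreal_ofReal, ← withDensity_smul _ (hχc k)]
    rfl
  have hfinite : ∫⁻ x, ENNReal.ofReal (f x) ∂μ ≠ ⊤ := by
    rw [← setLIntegral_univ, ← withDensity_apply _ MeasurableSet.univ, ← hf]
    exact measure_ne_top _ _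
  filter_upwards [(withDensity_eq_iff hfm.ennreal_ofReal.aemeasurable
    (by fun_prop) hfinite).1 hmixture] with x hx
  rw [← ENNReal.toReal_ofReal (hf0 x), hx, ENNReal.tsum_apply, ENNReal.tsum_toReal_eq fun k =>
    ENNReal.mul_ne_top (measure_ne_top _ _) ENNReal.ofReal_ne_top]
  simp only [ENNReal.toReal_mul, ENNReal.toReal_ofReal (hχ0 _), neg_add_eq_sub, Measure.real]

end LawOfSum

section DisjointTranslates

variable {G ι : Type*} [AddGroup G] [MeasurableSpace G] {μ : Measure G} {c : ι → G} {p : ι → ℝ}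
  {χ f : G → ℝ}

/-- Any two of the translates of the support of `χ` by the vectors `c k` meet in a `μ`-null set.
The translate by `c k` is encoded as the support of `x ↦ χ (x - c k)`. -/
def AEDisjointTranslates (μ : Measure G) (c : ι → G) (χ : G → ℝ) : Prop :=
  Pairwise (Function.onFun (AEDisjoint μ) fun k => Function.support fun x => χ (x - c k))

lemma AEDisjointTranslates.support_const_mul (hdisj : AEDisjointTranslates μ c χ) (p : ι → ℝ) :
    Pairwise (Function.onFun (AEDisjoint μ) fun k =>
      Function.support fun x => p k * χ (x - c k)) :=
  hdisj.mono fun _ _ h => h.mono (Function.support_mul_subset_right _ _)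
    (Function.support_mul_subset_right _ _)

variable [MeasurableAdd G]

lemma measurableSet_support_const_mul_comp_sub (hχm : Measurable χ) (r : ℝ) (a : G) :
    MeasurableSet (Function.support fun x => r * χ (x - a)) := by
  simp only [sub_eq_add_neg]
  exact measurableSet_support ((hχm.comp (measurable_add_const (-a))).const_mul r)

variable [μ.IsAddRightInvariant] [Countable ι]

lemma AEDisjointTranslates.integrable_comp_const_mul (hdisj : AEDisjointTranslates μ c χ)
    (hχm : Measurable χ) (hf : f =ᵐ[μ] fun x => ∑' k, p k * χ (x - c k)) {Φ : ℝ → ℝ}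
    (hΦ : Φ 0 = 0) (hint : Integrable (fun x => Φ (f x)) μ) (k : ι) :
    Integrable (fun u => Φ (p k * χ u)) μ := by
  have hterm := integrable_comp_of_integrable_comp_tsum
    (fun k => (measurableSet_support_const_mul_comp_sub hχm (p k) (c k)).nullMeasurableSet)
    (hdisj.support_const_mul p) hΦ (hint.congr (hf.fun_comp Φ)) k
  simpa only [add_sub_cancel_right] using hterm.comp_add_right (c k)

lemma AEDisjointTranslates.hasSum_integral_comp (hdisj : AEDisjointTranslates μ c χ)
    (hχm : Measurable χ) (hf : f =ᵐ[μ] fun x => ∑' k, p k * χ (x - c k)) {Φ : ℝ → ℝ}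
    (hΦ : Φ 0 = 0) (hint : Integrable (fun x => Φ (f x)) μ) :
    HasSum (fun k => ∫ u, Φ (p k * χ u) ∂μ) (∫ x, Φ (f x) ∂μ) := by
  have hsum := hasSum_integral_comp_of_aedisjoint
    (fun k => (measurableSet_support_const_mul_comp_sub hχm (p k) (c k)).nullMeasurableSet)
    (hdisj.support_const_mul p) hΦ (hint.congr (hf.fun_comp Φ))
  have hmix : ∫ x, Φ (f x) ∂μ = ∫ x, Φ (∑' k, p k * χ (x - c k)) ∂μ :=
    integral_congr_ae (hf.fun_comp Φ)
  rw [hmix]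
  exact hsum.congr_fun fun k => (integral_sub_right_eq_self (fun u => Φ (p k * χ u)) (c k)).symm

lemma AEDisjointTranslates.integral_rpow (hdisj : AEDisjointTranslates μ c χ)
    (hχm : Measurable χ) (hχ0 : ∀ x, 0 ≤ χ x) (hp0 : ∀ k, 0 ≤ p k)
    (hf : f =ᵐ[μ] fun x => ∑' k, p k * χ (x - c k)) {s : ℝ} (hs : s ≠ 0)
    (hint : Integrable (fun x => f x ^ s) μ) :
    ∫ x, f x ^ s ∂μ = (∑' k, p k ^ s) * ∫ u, χ u ^ s ∂μ := by
  rw [← (hdisj.hasSum_integral_comp hχm hf (Φ := fun t => t ^ s) (Real.zero_rpow hs) hint).tsum_eq]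
  simp only [Real.mul_rpow (hp0 _) (hχ0 _), integral_const_mul, tsum_mul_right]

lemma AEDisjointTranslates.hasSum_weights (hdisj : AEDisjointTranslates μ c χ)
    (hχm : Measurable χ) (hχ1 : ∫ u, χ u ∂μ = 1)
    (hf : f =ᵐ[μ] fun x => ∑' k, p k * χ (x - c k)) (hint : Integrable f μ) :
    HasSum p (∫ x, f x ∂μ) := by
  simpa only [integral_const_mul, hχ1, mul_one] using
    hdisj.hasSum_integral_comp hχm hf (Φ := fun t => t) rfl hint

lemma AEDisjointTranslates.integrable_negMulLog (hdisj : AEDisjointTranslates μ c χ)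
    (hχm : Measurable χ) (hχ : Integrable χ μ) (hf : f =ᵐ[μ] fun x => ∑' k, p k * χ (x - c k))
    (hint : Integrable (fun x => negMulLog (f x)) μ) {k : ι} (hk : p k ≠ 0) :
    Integrable (fun u => negMulLog (χ u)) μ := by
  have hscaled : Integrable (fun u => p k * negMulLog (χ u)) μ := by
    refine ((hdisj.integrable_comp_const_mul hχm hf negMulLog_zero hint k).sub
      (hχ.mul_const (negMulLog (p k)))).congr (ae_of_all _ fun u => ?_)
    simp [negMulLog_mul]
  exact (integrable_const_mul_iff (IsUnit.mk0 _ hk) _).1 hscaled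

lemma AEDisjointTranslates.hasSum_negMulLog_weights (hdisj : AEDisjointTranslates μ c χ)
    (hχm : Measurable χ) (hχ1 : ∫ u, χ u ∂μ = 1)
    (hf : f =ᵐ[μ] fun x => ∑' k, p k * χ (x - c k)) (hf1 : ∫ x, f x ∂μ = 1)
    (hint : Integrable (fun x => negMulLog (f x)) μ) :
    HasSum (fun k => negMulLog (p k))
      (∫ x, negMulLog (f x) ∂μ - ∫ u, negMulLog (χ u) ∂μ) := by
  have hχ : Integrable χ μ := integrable_of_integral_eq_one hχ1
  have hp1 : HasSum p 1 :=
    hf1 ▸ hdisj.hasSum_weights hχm hχ1 hf (integrable_of_integral_eq_one hf1)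
  obtain ⟨k, hk⟩ : ∃ k, p k ≠ 0 := by
    by_contra! hp
    obtain rfl : p = 0 := funext hp
    exact one_ne_zero (hp1.unique hasSum_zero)
  have hχlog := hdisj.integrable_negMulLog hχm hχ hf hint hk
  have hterm (k : ι) : ∫ u, negMulLog (p k * χ u) ∂μ
      = negMulLog (p k) + p k * ∫ u, negMulLog (χ u) ∂μ := by
    simp only [negMulLog_mul]
    rw [integral_add (hχ.mul_const _) (hχlog.const_mul _), integral_mul_const,
      integral_const_mul, hχ1, one_mul]
  have hsum := hdisj.hasSum_integral_comp hχm hf negMulLog_zero hint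
  simp only [hterm] at hsum
  simpa only [add_sub_cancel_right, one_mul] using
    hsum.sub (hp1.mul_right (∫ u, negMulLog (χ u) ∂μ))

end DisjointTranslates

section RealLine

lemma aedisjointTranslates_lattice {χ : ℝ → ℝ} {a Δ : ℝ} (x₀ : ℝ)
    (hχ : Function.support χ ⊆ Set.Icc a (a + Δ)) :
    AEDisjointTranslates volume (fun k : ℤ => x₀ + (k : ℝ) * Δ) χ := by
  have hcell (k : ℤ) : (Function.support fun x => χ (x - (x₀ + (k : ℝ) * Δ)))
      ⊆ Set.Icc (a + x₀ + k • Δ) (a + x₀ + (k + 1) • Δ) := fun x hx => by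
    obtain ⟨hleft, hright⟩ := hχ hx
    simp only [zsmul_eq_mul, Int.cast_add, Int.cast_one]
    constructor <;> linarith
  exact (Set.pairwise_disjoint_Ioc_add_zsmul (a + x₀) Δ).mono fun j k h =>
    (h.aedisjoint.congr Ioc_ae_eq_Icc.symm Ioc_ae_eq_Icc.symm).mono (hcell j) (hcell k)

lemma integral_comp_indicator_const {α : Type*} [MeasurableSpace α] {μ : Measure α} {s : Set α}
    (hs : MeasurableSet s) {Φ : ℝ → ℝ} (hΦ : Φ 0 = 0) (r : ℝ) :
    ∫ x, Φ (s.indicator (fun _ => r) x) ∂μ = μ.real s * Φ r := by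
  have hcomp : (fun x => Φ (s.indicator (fun _ => r) x)) = s.indicator fun _ => Φ r :=
    (Set.indicator_comp_of_zero (g := Φ) hΦ).symm
  rw [hcomp, integral_indicator_const _ hs, smul_eq_mul]

lemma mul_log_one_div (t : ℝ) : t * Real.log (1 / t) = negMulLog t := by
  simp [negMulLog]

lemma diffRenyiEntropy_uniform {s : Set ℝ} (hs : MeasurableSet s) {L : ℝ} (hL : 0 < L)
    (hsL : volume.real s = L) {α : ℝ} (hα : α ≠ 0) :
    diffRenyiEntropy α (s.indicator fun _ => 1 / L) = Real.log L := by
  unfold diffRenyiEntropy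
  split_ifs with h1
  · rw [integral_comp_indicator_const hs (Φ := fun t => t * Real.log (1 / t)) (by simp), hsL]
    field_simp
  · have h1α : 1 - α ≠ 0 := sub_ne_zero.2 (Ne.symm h1)
    have hlog : Real.log (L * (1 / L) ^ α) = (1 - α) * Real.log L := by
      rw [Real.log_mul hL.ne' (by positivity), Real.log_rpow (by positivity), one_div,
        Real.log_inv]
      ring
    rw [integral_comp_indicator_const hs (Φ := fun t => t ^ α) (Real.zero_rpow hα), hsL, hlog]
    field_simp

theorem massey_equivalence_general {Ω : Type*} [MeasurableSpace Ω] {P : Measure Ω}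
    [IsProbabilityMeasure P] {X U : Ω → ℝ} (hX : Measurable X) (hU : Measurable U)
    (hind : ProbabilityTheory.IndepFun X U P) {c : ℤ → ℝ} (hc : Function.Injective c)
    (hXc : ∀ᵐ ω ∂P, X ω ∈ Set.range c)
    {χ : ℝ → ℝ} (hχm : Measurable χ) (hχ0 : ∀ x, 0 ≤ χ x)
    (hχ : P.map U = volume.withDensity fun x => ENNReal.ofReal (χ x))
    (hdisj : AEDisjointTranslates volume c χ)
    {f : ℝ → ℝ} (hfm : Measurable f) (hf0 : ∀ x, 0 ≤ f x)
    (hf : P.map (fun ω => X ω + U ω) = volume.withDensity fun x => ENNReal.ofReal (f x))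
    {α : ℝ} (hα : 0 < α)
    (hint1 : α = 1 → Integrable fun x => f x * Real.log (1 / f x))
    (hintα : α ≠ 1 → Integrable fun x => f x ^ α) :
    discreteRenyiEntropy α (fun k => P.real (X ⁻¹' {c k}))
      = diffRenyiEntropy α f - diffRenyiEntropy α χ := by
  have hmix := ae_eq_tsum_of_map_add_eq_withDensity hX hU hind hc hXc hχm hχ0 hχ hfm hf0 hf
  have hχ1 : ∫ u, χ u = 1 :=
    integral_eq_one_of_map_eq_withDensity hU.aemeasurable hχm hχ0 hχ
  have hf1 : ∫ x, f x = 1 :=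
    integral_eq_one_of_map_eq_withDensity (hX.add hU).aemeasurable hfm hf0 hf
  unfold discreteRenyiEntropy diffRenyiEntropy
  split_ifs with h1
  · simp only [mul_log_one_div] at hint1 ⊢
    exact (hdisj.hasSum_negMulLog_weights hχm hχ1 hmix hf1 (hint1 h1)).tsum_eq
  · have hfactor := hdisj.integral_rpow hχm hχ0 (fun _ => measureReal_nonneg) hmix hα.ne' (hintα h1)
    have hpos : 0 < ∫ x, f x ^ α := integral_rpow_pos hα.ne' hf0 (hf1 ▸ one_pos) (hintα h1)
    obtain ⟨hsum0, hint0⟩ := mul_ne_zero_iff.1 (hfactor ▸ hpos.ne')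
    rw [hfactor, Real.log_mul hsum0 hint0]
    ring

end RealLine

/-- Massey's equivalence: if `X` takes values in the lattice `{x₀ + kΔ : k ∈ ℤ}` and `U`
is an independent continuous random variable supported on an interval of length at most `Δ`,
then `H_α(X) = h_α(X + U) - h_α(U)` for every `α > 0` (whenever these quantities are defined);
in particular `H_α(X) = h_α(X + U) - ln Δ` when `U` is uniform on an interval of length `Δ`. -/
theorem massey_equivalence
    {Ω : Type*} [MeasureSpace Ω] [IsProbabilityMeasure (volume : Measure Ω)]
    (X U : Ω → ℝ) (hXm : Measurable X) (hUm : Measurable U)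
    (hInd : ProbabilityTheory.IndepFun X U)
    (x₀ Δ : ℝ) (hΔ : 0 < Δ)
    (hlattice : ∀ ω, ∃ k : ℤ, X ω = x₀ + (k : ℝ) * Δ)
    -- `U` has density `χ` whose support is contained in an interval of length at most `Δ`
    (χ : ℝ → ℝ) (hχm : Measurable χ) (hχ0 : ∀ x, 0 ≤ χ x)
    (hUdens : Measure.map U (volume : Measure Ω)
      = (volume : Measure ℝ).withDensity (fun x => ENNReal.ofReal (χ x)))
    (a b : ℝ) (hab : b - a ≤ Δ) (hsupp : ∀ x, χ x ≠ 0 → x ∈ Set.Icc a b)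
    -- `X + U` has density `f`
    (f : ℝ → ℝ) (hfm : Measurable f) (hf0 : ∀ x, 0 ≤ f x)
    (hfdens : Measure.map (fun ω => X ω + U ω) (volume : Measure Ω)
      = (volume : Measure ℝ).withDensity (fun x => ENNReal.ofReal (f x)))
    -- `p` is the probability mass function of `X`
    (p : ℤ → ℝ) (hp : ∀ k : ℤ, p k = ((volume : Measure Ω) {ω | X ω = x₀ + (k : ℝ) * Δ}).toReal)
    (α : ℝ) (hα : 0 < α)
    -- the entropies of order `α` are defined
    (hdef1 : α = 1 →
      Summable (fun k : ℤ => p k * Real.log (1 / p k)) ∧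
      Integrable (fun x => f x * Real.log (1 / f x)) ∧
      Integrable (fun x => χ x * Real.log (1 / χ x)))
    (hdefα : α ≠ 1 →
      Summable (fun k : ℤ => p k ^ α) ∧
      Integrable (fun x => f x ^ α) ∧
      Integrable (fun x => χ x ^ α)) :
    discreteRenyiEntropy α p = diffRenyiEntropy α f - diffRenyiEntropy α χ ∧
    (χ = Set.indicator (Set.Icc a (a + Δ)) (fun _ => 1 / Δ) →
      discreteRenyiEntropy α p = diffRenyiEntropy α f - Real.log Δ) := by
  obtain rfl : p = fun k : ℤ => volume.real (X ⁻¹' {x₀ + (k : ℝ) * Δ}) := funext hp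
  have hinj : Function.Injective fun k : ℤ => x₀ + (k : ℝ) * Δ := fun j k h => by
    simpa [hΔ.ne'] using h
  have hsuppΔ : Function.support χ ⊆ Set.Icc a (a + Δ) := fun x hx =>
    Set.Icc_subset_Icc_right (by linarith) (hsupp x hx)
  have hmain := massey_equivalence_general hXm hUm hInd hinj
    (ae_of_all _ fun ω => (hlattice ω).imp fun _ h => h.symm) hχm hχ0 hUdens
    (aedisjointTranslates_lattice x₀ hsuppΔ) hfm hf0 hfdens hα
    (fun h => (hdef1 h).2.1) (fun h => (hdefα h).2.1)
  refine ⟨hmain, fun hunif => ?_⟩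
  rw [hmain, hunif, diffRenyiEntropy_uniform measurableSet_Icc hΔ (by simp [hΔ.le]) hα.ne']
end

section
/- Let ρ > 0 and let 𝒳 be a continuous real random variable with probability density f, finite differential entropy h(𝒳), and finite ρ-th absolute moment θ = E[|𝒳|^ρ]. Then h(𝒳) ≤ (1/ρ) ln(ρeθ) + ln(2·Γ(1 + 1/ρ)), with equality if and only if 𝒳 is a generalized Gaussian random variable, i.e., f(x) = e^{−|x|^ρ/(ρθ)} / (2·Γ(1+1/ρ)·(ρθ)^{1/ρ}) almost everywhere. If moreover 𝒳 ≥ 0 almost surely and θ = E[𝒳^ρ], then the same inequality holds with the factor 2 inside the logarithm removed: h(𝒳) ≤ (1/ρ) ln(ρeθ) + ln Γ(1 + 1/ρ). -/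
open MeasureTheory Real

/-!
For densities `f` and `g`, the integral of the nonnegative function `g * klFun (f / g)` is the
difference between the cross entropy of `f` against `g` and the entropy of `f`; it vanishes only
when `f = g` almost everywhere. When `g` is proportional to `exp (-T)`, its logarithm is affine
in `T`, so the cross entropy sees `f` only through the mean of `T`. The energy
`T x = |x| ^ ρ / (ρθ)` has mean `1 / ρ` under `f`, and its partition function on the line is
`2 Γ(1 + 1/ρ) (ρθ) ^ (1/ρ)`; a nonnegative variable only sees the half-line, whose partition
function is half as large.
-/

section Entropy

open InformationTheory

variable {α : Type*} {mα : MeasurableSpace α} {μ : Measure α} {f g T : α → ℝ}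

/-- The cross entropy `∫ f ln (1 / g) dμ` of the densities `f` and `g` relative to `μ`, an upper
bound for the entropy of `f`. Where `g` vanishes the integrand is `0`, and not `∞`, so it is only
meaningful when `f` vanishes there too. -/
noncomputable def crossEntropy (f g : α → ℝ) (μ : Measure α) : ℝ :=
  ∫ x, f x * log (1 / g x) ∂μ

/-- The differential entropy `h(f) = ∫ f ln (1 / f) dμ` of a density `f` relative to `μ`,
with the convention `0 ln (1 / 0) = 0`, which holds in Lean. -/
noncomputable def differentialEntropy (f : α → ℝ) (μ : Measure α) : ℝ :=
  crossEntropy f f μ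

/-- The Gibbs density `exp (-T) / ∫ exp (-T) dμ` of the energy `T` relative to `μ`, which
maximizes the entropy among the densities with a given mean energy. -/
noncomputable def gibbsDensity (T : α → ℝ) (μ : Measure α) (x : α) : ℝ :=
  exp (-T x) / ∫ y, exp (-T y) ∂μ

lemma mul_klFun_div {a b : ℝ} (hab : b = 0 → a = 0) :
    b * klFun (a / b) = a * log (1 / b) - a * log (1 / a) + (b - a) := by
  rcases eq_or_ne b 0 with rfl | hb
  · simp [hab rfl]
  rcases eq_or_ne a 0 with rfl | ha
  · simp [klFun]
  rw [klFun, log_div ha hb, one_div, one_div, log_inv, log_inv]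
  field_simp
  ring

lemma mul_klFun_div_nonneg {a b : ℝ} (ha : 0 ≤ a) (hb : 0 ≤ b) : 0 ≤ b * klFun (a / b) :=
  mul_nonneg hb (klFun_nonneg (div_nonneg ha hb))

lemma mul_klFun_div_eq_zero_iff {a b : ℝ} (ha : 0 ≤ a) (hb : 0 ≤ b) (hab : b = 0 → a = 0) :
    b * klFun (a / b) = 0 ↔ a = b := by
  rcases eq_or_ne b 0 with rfl | hb'
  · simp [hab rfl]
  · rw [mul_eq_zero_iff_left hb', klFun_eq_zero_iff (div_nonneg ha hb), div_eq_one_iff_eq hb']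

lemma integrable_mul_klFun_div (hfg : ∀ᵐ x ∂μ, g x = 0 → f x = 0)
    (hf : Integrable f μ) (hg : Integrable g μ)
    (hent : Integrable (fun x => f x * log (1 / f x)) μ)
    (hcross : Integrable (fun x => f x * log (1 / g x)) μ) :
    Integrable (fun x => g x * klFun (f x / g x)) μ :=
  ((hcross.sub hent).add (hg.sub hf)).congr (hfg.mono fun _ hx => (mul_klFun_div hx).symm)

lemma integral_mul_klFun_div (hfg : ∀ᵐ x ∂μ, g x = 0 → f x = 0)
    (hf : Integrable f μ) (hg : Integrable g μ)
    (hent : Integrable (fun x => f x * log (1 / f x)) μ)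
    (hcross : Integrable (fun x => f x * log (1 / g x)) μ) :
    ∫ x, g x * klFun (f x / g x) ∂μ =
      crossEntropy f g μ - differentialEntropy f μ + (∫ x, g x ∂μ - ∫ x, f x ∂μ) := by
  rw [integral_congr_ae (hfg.mono fun _ hx => mul_klFun_div hx),
    integral_add (hcross.sub' hent) (hg.sub' hf), integral_sub hcross hent, integral_sub hg hf]
  rfl

theorem differentialEntropy_le_crossEntropy (hf0 : 0 ≤ᵐ[μ] f) (hg0 : 0 ≤ᵐ[μ] g)
    (hfg : ∀ᵐ x ∂μ, g x = 0 → f x = 0) (hf : Integrable f μ) (hg : Integrable g μ)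
    (hent : Integrable (fun x => f x * log (1 / f x)) μ)
    (hcross : Integrable (fun x => f x * log (1 / g x)) μ)
    (hmass : ∫ x, g x ∂μ ≤ ∫ x, f x ∂μ) :
    differentialEntropy f μ ≤ crossEntropy f g μ := by
  have hgap : 0 ≤ ∫ x, g x * klFun (f x / g x) ∂μ :=
    integral_nonneg_of_ae (hf0.mp (hg0.mono fun _ hgx hfx => mul_klFun_div_nonneg hfx hgx))
  rw [integral_mul_klFun_div hfg hf hg hent hcross] at hgap
  linarith

theorem differentialEntropy_eq_crossEntropy_iff (hf0 : 0 ≤ᵐ[μ] f) (hg0 : 0 ≤ᵐ[μ] g)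
    (hfg : ∀ᵐ x ∂μ, g x = 0 → f x = 0) (hf : Integrable f μ) (hg : Integrable g μ)
    (hent : Integrable (fun x => f x * log (1 / f x)) μ)
    (hcross : Integrable (fun x => f x * log (1 / g x)) μ)
    (hmass : ∫ x, g x ∂μ = ∫ x, f x ∂μ) :
    differentialEntropy f μ = crossEntropy f g μ ↔ f =ᵐ[μ] g := by
  have hgap0 : 0 ≤ᵐ[μ] fun x => g x * klFun (f x / g x) :=
    hf0.mp (hg0.mono fun _ hgx hfx => mul_klFun_div_nonneg hfx hgx)
  calc differentialEntropy f μ = crossEntropy f g μ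
      ↔ ∫ x, g x * klFun (f x / g x) ∂μ = 0 := by
        rw [integral_mul_klFun_div hfg hf hg hent hcross, hmass, sub_self, add_zero, sub_eq_zero,
          eq_comm]
    _ ↔ (fun x => g x * klFun (f x / g x)) =ᵐ[μ] 0 :=
        integral_eq_zero_iff_of_nonneg_ae hgap0 (integrable_mul_klFun_div hfg hf hg hent hcross)
    _ ↔ f =ᵐ[μ] g := by
        refine Filter.eventually_congr ?_
        filter_upwards [hf0, hg0, hfg] with x hfx hgx hx
        exact mul_klFun_div_eq_zero_iff hfx hgx hx

lemma gibbsDensity_pos (hZ : ∫ x, exp (-T x) ∂μ ≠ 0) (x : α) : 0 < gibbsDensity T μ x :=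
  div_pos (exp_pos _) ((integral_nonneg fun _ => (exp_pos _).le).lt_of_ne' hZ)

lemma integrable_gibbsDensity (hZ : ∫ x, exp (-T x) ∂μ ≠ 0) :
    Integrable (gibbsDensity T μ) μ :=
  (Integrable.of_integral_ne_zero hZ).div_const _

lemma integral_gibbsDensity (hZ : ∫ x, exp (-T x) ∂μ ≠ 0) :
    ∫ x, gibbsDensity T μ x ∂μ = 1 := by
  simp only [gibbsDensity, integral_div, div_self hZ]

lemma log_one_div_gibbsDensity (hZ : ∫ x, exp (-T x) ∂μ ≠ 0) (x : α) :
    log (1 / gibbsDensity T μ x) = T x + log (∫ y, exp (-T y) ∂μ) := by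
  rw [gibbsDensity, one_div_div, log_div hZ (exp_ne_zero _), log_exp]
  ring

lemma integrable_mul_log_one_div_gibbsDensity (hZ : ∫ x, exp (-T x) ∂μ ≠ 0)
    (hf : Integrable f μ) (hTf : Integrable (fun x => T x * f x) μ) :
    Integrable (fun x => f x * log (1 / gibbsDensity T μ x)) μ := by
  simp only [log_one_div_gibbsDensity hZ, mul_comm (f _), add_mul]
  exact hTf.add (hf.const_mul _)

lemma crossEntropy_gibbsDensity (hZ : ∫ x, exp (-T x) ∂μ ≠ 0) (hf : Integrable f μ)
    (hf1 : ∫ x, f x ∂μ = 1) (hTf : Integrable (fun x => T x * f x) μ) :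
    crossEntropy f (gibbsDensity T μ) μ = ∫ x, T x * f x ∂μ + log (∫ x, exp (-T x) ∂μ) := by
  simp only [crossEntropy, log_one_div_gibbsDensity hZ, mul_comm (f _), add_mul]
  rw [integral_add hTf (hf.const_mul _), integral_const_mul, hf1, mul_one]

theorem differentialEntropy_le_integral_add_log (hZ : ∫ x, exp (-T x) ∂μ ≠ 0)
    (hf0 : 0 ≤ᵐ[μ] f) (hf1 : ∫ x, f x ∂μ = 1)
    (hent : Integrable (fun x => f x * log (1 / f x)) μ)
    (hTf : Integrable (fun x => T x * f x) μ) :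
    differentialEntropy f μ ≤ ∫ x, T x * f x ∂μ + log (∫ x, exp (-T x) ∂μ) := by
  have hf : Integrable f μ := .of_integral_ne_zero (hf1.trans_ne one_ne_zero)
  rw [← crossEntropy_gibbsDensity hZ hf hf1 hTf]
  exact differentialEntropy_le_crossEntropy hf0 (.of_forall fun x => (gibbsDensity_pos hZ x).le)
    (.of_forall fun x hx => absurd hx (gibbsDensity_pos hZ x).ne') hf (integrable_gibbsDensity hZ)
    hent (integrable_mul_log_one_div_gibbsDensity hZ hf hTf)
    ((integral_gibbsDensity hZ).trans hf1.symm).le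

theorem differentialEntropy_eq_integral_add_log_iff (hZ : ∫ x, exp (-T x) ∂μ ≠ 0)
    (hf0 : 0 ≤ᵐ[μ] f) (hf1 : ∫ x, f x ∂μ = 1)
    (hent : Integrable (fun x => f x * log (1 / f x)) μ)
    (hTf : Integrable (fun x => T x * f x) μ) :
    differentialEntropy f μ = ∫ x, T x * f x ∂μ + log (∫ x, exp (-T x) ∂μ) ↔
      f =ᵐ[μ] gibbsDensity T μ := by
  have hf : Integrable f μ := .of_integral_ne_zero (hf1.trans_ne one_ne_zero)
  rw [← crossEntropy_gibbsDensity hZ hf hf1 hTf]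
  exact differentialEntropy_eq_crossEntropy_iff hf0
    (.of_forall fun x => (gibbsDensity_pos hZ x).le)
    (.of_forall fun x hx => absurd hx (gibbsDensity_pos hZ x).ne') hf (integrable_gibbsDensity hZ)
    hent (integrable_mul_log_one_div_gibbsDensity hZ hf hTf)
    ((integral_gibbsDensity hZ).trans hf1.symm)

lemma differentialEntropy_restrict_of_ae_compl_eq_zero {s : Set α}
    (hs : ∀ᵐ x ∂μ, x ∉ s → f x = 0) :
    differentialEntropy f (μ.restrict s) = differentialEntropy f μ :=
  setIntegral_eq_integral_of_ae_compl_eq_zero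
    (hs.mono fun x hx hxs => by rw [hx hxs, zero_mul])

theorem differentialEntropy_le_integral_add_log_setIntegral {s : Set α}
    (hs : ∀ᵐ x ∂μ, x ∉ s → f x = 0) (hZ : ∫ x in s, exp (-T x) ∂μ ≠ 0)
    (hf0 : 0 ≤ᵐ[μ] f) (hf1 : ∫ x, f x ∂μ = 1)
    (hent : Integrable (fun x => f x * log (1 / f x)) μ)
    (hTf : Integrable (fun x => T x * f x) μ) :
    differentialEntropy f μ ≤ ∫ x, T x * f x ∂μ + log (∫ x in s, exp (-T x) ∂μ) := by
  have hmass : ∫ x in s, f x ∂μ = 1 :=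
    (setIntegral_eq_integral_of_ae_compl_eq_zero hs).trans hf1
  have hmean : ∫ x in s, T x * f x ∂μ = ∫ x, T x * f x ∂μ :=
    setIntegral_eq_integral_of_ae_compl_eq_zero
      (hs.mono fun x hx hxs => by rw [hx hxs, mul_zero])
  rw [← differentialEntropy_restrict_of_ae_compl_eq_zero hs, ← hmean]
  exact differentialEntropy_le_integral_add_log hZ (ae_restrict_of_ae hf0) hmass
    hent.integrableOn hTf.integrableOn

lemma integral_mul_pos_of_ae_pos (hT : ∀ᵐ x ∂μ, 0 < T x) (hf0 : 0 ≤ᵐ[μ] f)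
    (hf : ∫ x, f x ∂μ ≠ 0) (hTf : Integrable (fun x => T x * f x) μ) :
    0 < ∫ x, T x * f x ∂μ := by
  have hTf0 : 0 ≤ᵐ[μ] fun x => T x * f x :=
    hT.mp (hf0.mono fun _ hfx hTx => mul_nonneg hTx.le hfx)
  refine (integral_nonneg_of_ae hTf0).lt_of_ne' fun hzero => hf (integral_eq_zero_of_ae ?_)
  filter_upwards [(integral_eq_zero_iff_of_nonneg_ae hTf0 hTf).1 hzero, hT] with x hx hTx
  exact (mul_eq_zero.1 hx).resolve_left hTx.ne'

end Entropy

lemma ae_abs_rpow_pos (ρ : ℝ) : ∀ᵐ x : ℝ, 0 < |x| ^ ρ :=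
  (Measure.ae_ne volume 0).mono fun _ hx => rpow_pos_of_pos (abs_pos.2 hx) ρ

lemma integral_Ioi_exp_neg_rpow_div {ρ c : ℝ} (hρ : 0 < ρ) (hc : 0 < c) :
    ∫ x in Set.Ioi (0 : ℝ), exp (-(x ^ ρ / c)) = Gamma (1 + 1 / ρ) * c ^ (1 / ρ) := by
  have hscale : c⁻¹ ^ (-1 / ρ) = c ^ (1 / ρ) := by
    rw [neg_div, inv_rpow hc.le, rpow_neg hc.le, inv_inv]
  calc ∫ x in Set.Ioi (0 : ℝ), exp (-(x ^ ρ / c))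
      = ∫ x in Set.Ioi (0 : ℝ), exp (-c⁻¹ * x ^ ρ) := by
        simp only [div_eq_inv_mul, neg_mul]
    _ = Gamma (1 + 1 / ρ) * c ^ (1 / ρ) := by
        rw [integral_exp_neg_mul_rpow hρ (inv_pos.2 hc), hscale, add_comm, mul_comm]

lemma integral_Ici_exp_neg_abs_rpow_div {ρ c : ℝ} (hρ : 0 < ρ) (hc : 0 < c) :
    ∫ x in Set.Ici (0 : ℝ), exp (-(|x| ^ ρ / c)) = Gamma (1 + 1 / ρ) * c ^ (1 / ρ) := by
  rw [integral_Ici_eq_integral_Ioi, ← integral_Ioi_exp_neg_rpow_div hρ hc]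
  exact setIntegral_congr_fun measurableSet_Ioi fun x hx => by
    simp only [abs_of_pos (Set.mem_Ioi.1 hx)]

lemma integral_exp_neg_abs_rpow_div {ρ c : ℝ} (hρ : 0 < ρ) (hc : 0 < c) :
    ∫ x : ℝ, exp (-(|x| ^ ρ / c)) = 2 * Gamma (1 + 1 / ρ) * c ^ (1 / ρ) := by
  rw [integral_comp_abs (f := fun x => exp (-(x ^ ρ / c))),
    integral_Ioi_exp_neg_rpow_div hρ hc, mul_assoc]

lemma one_div_add_log_mul_rpow {ρ θ C : ℝ} (hρ : 0 < ρ) (hθ : 0 < θ) (hC : C ≠ 0) :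
    1 / ρ + log (C * (ρ * θ) ^ (1 / ρ)) = 1 / ρ * log (ρ * exp 1 * θ) + log C := by
  have hc : 0 < ρ * θ := mul_pos hρ hθ
  rw [log_mul hC (rpow_pos_of_pos hc _).ne', log_rpow hc, mul_right_comm,
    log_mul hc.ne' (exp_ne_zero 1), log_exp]
  ring

/-- Maximum-entropy bound for a fixed `ρ`-th absolute moment: if `𝒳` has density `f`,
finite differential entropy and `θ = E[|𝒳|^ρ] < ∞`, then
`h(𝒳) ≤ (1/ρ) ln(ρeθ) + ln(2Γ(1+1/ρ))`, with equality iff `𝒳` is a generalized Gaussian;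
if moreover `𝒳 ≥ 0` a.s., the same inequality holds with the factor `2` removed. -/
theorem maxent_rho_moment
    (ρ : ℝ) (hρ : 0 < ρ)
    (f : ℝ → ℝ) (hfm : Measurable f) (hf0 : ∀ x, 0 ≤ f x)
    (hf1 : ∫ x, f x = 1) (hfi : Integrable f)
    (hent : Integrable (fun x => f x * Real.log (1 / f x)))
    (θ : ℝ) (hθ : θ = ∫ x, |x| ^ ρ * f x) (hθi : Integrable (fun x => |x| ^ ρ * f x)) :
    ((∫ x, f x * Real.log (1 / f x)) ≤
        (1 / ρ) * Real.log (ρ * Real.exp 1 * θ) + Real.log (2 * Real.Gamma (1 + 1 / ρ)) ∧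
      ((∫ x, f x * Real.log (1 / f x)) =
          (1 / ρ) * Real.log (ρ * Real.exp 1 * θ) + Real.log (2 * Real.Gamma (1 + 1 / ρ)) ↔
        f =ᵐ[volume] fun x =>
          Real.exp (-(|x| ^ ρ / (ρ * θ))) / (2 * Real.Gamma (1 + 1 / ρ) * (ρ * θ) ^ (1 / ρ)))) ∧
    ((∀ᵐ x ∂(volume : Measure ℝ), x < 0 → f x = 0) →
      (∫ x, f x * Real.log (1 / f x)) ≤
        (1 / ρ) * Real.log (ρ * Real.exp 1 * θ) + Real.log (Real.Gamma (1 + 1 / ρ))) := by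
  have hf0' : 0 ≤ᵐ[volume] f := .of_forall hf0
  have hθpos : 0 < θ :=
    hθ ▸ integral_mul_pos_of_ae_pos (ae_abs_rpow_pos ρ) hf0' (hf1.trans_ne one_ne_zero) hθi
  have hc : 0 < ρ * θ := mul_pos hρ hθpos
  have hΓ : 0 < Gamma (1 + 1 / ρ) := Gamma_pos_of_pos (by positivity)
  have hTf : Integrable (fun x => |x| ^ ρ / (ρ * θ) * f x) := by
    simpa only [div_mul_eq_mul_div] using hθi.div_const (ρ * θ)
  have hmean : ∫ x, |x| ^ ρ / (ρ * θ) * f x = 1 / ρ := by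
    simp only [div_mul_eq_mul_div, integral_div, ← hθ, div_mul_cancel_right₀ hθpos.ne', one_div]
  have hZline := integral_exp_neg_abs_rpow_div hρ hc
  have hZhalf := integral_Ici_exp_neg_abs_rpow_div hρ hc
  refine ⟨?_, fun hneg => ?_⟩
  · have hZne := hZline.trans_ne (by positivity)
    rw [← one_div_add_log_mul_rpow hρ hθpos (by positivity), ← hZline, ← hmean]
    exact ⟨differentialEntropy_le_integral_add_log hZne hf0' hf1 hent hTf,
      differentialEntropy_eq_integral_add_log_iff hZne hf0' hf1 hent hTf⟩
  · rw [← one_div_add_log_mul_rpow hρ hθpos hΓ.ne', ← hZhalf, ← hmean]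
    exact differentialEntropy_le_integral_add_log_setIntegral
      (hneg.mono fun x hx hxs => hx (not_le.1 hxs)) (hZhalf.trans_ne (by positivity)) hf0' hf1
      hent hTf
end

section
/- Let α > 1/2, α ≠ 1, and let 𝒳 be a continuous real random variable with 𝒳 > 0 almost surely, probability density f, finite differential Rényi entropy h_α(𝒳), and finite mean μ. Then h_α(𝒳) ≤ ln μ + (α/(1−α)) ln( α/(2α−1) ), with equality if and only if 𝒳 is α-exponential, i.e., f(x) is proportional on (0,∞) to (1 + βx/μ)^{1/(α−1)} restricted to where this is nonnegative, with β = (1−α)/(2α−1). -/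
open MeasureTheory Real

/-!
The power `t ↦ t ^ α` has slope `α * l` at `t = l ^ (1 / (α - 1))`, and it lies on one side of its
tangent line there, above or below according to the sign of `1 - α`. Take `l = L x`, with `L` a
function whose integral against a density is prescribed, and integrate the tangent-line inequality
at `f x`: the linear term depends on `f` only through `∫ L f`, so among all densities with the same
`∫ L f` the Rényi entropy is maximal exactly at `L ^ (1 / (α - 1))`. Under a mean constraint on
`(0, ∞)` the function `L` is affine and this maximizer is the α-exponential density.
-/

open Set Filter Topology

section TangentLine

variable {α l s : ℝ}

/-- The point of `[0, ∞)` at which `t ↦ t ^ α` has slope `α * l`, with value `0` for `l ≤ 0`. It is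
the value of the entropy maximizer at a point where the constraint function equals `l`. -/
noncomputable def tangentPoint (α l : ℝ) : ℝ := (max l 0) ^ (1 / (α - 1))

/-- The signed vertical distance at `s` between `t ↦ t ^ α` and the line of slope `α * l` through
its graph at `tangentPoint α l`. The factor `1 - α` makes it nonnegative both in the concave case
`α < 1` and in the convex case `1 < α`. -/
noncomputable def tangentGap (α l s : ℝ) : ℝ :=
  (1 - α) * ((1 - α) * tangentPoint α l ^ α + α * (l * s) - s ^ α)

lemma tangentPoint_nonneg : 0 ≤ tangentPoint α l :=
  rpow_nonneg (le_max_right l 0) _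

lemma tangentPoint_pos (hl : 0 < l) : 0 < tangentPoint α l :=
  rpow_pos_of_pos (lt_max_of_lt_left hl) _

lemma tangentPoint_of_nonpos (hα1 : α ≠ 1) (hl : l ≤ 0) : tangentPoint α l = 0 := by
  rw [tangentPoint, max_eq_right hl, zero_rpow (one_div_ne_zero (sub_ne_zero.mpr hα1))]

lemma tangentPoint_rpow (p : ℝ) : tangentPoint α l ^ p = (max l 0) ^ (p / (α - 1)) := by
  rw [tangentPoint, ← rpow_mul (le_max_right l 0), one_div_mul_eq_div]

lemma tangentPoint_rpow_sub_one (hα1 : α ≠ 1) (hl : 0 < l) : tangentPoint α l ^ (α - 1) = l := by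
  rw [tangentPoint_rpow, div_self (sub_ne_zero.mpr hα1), rpow_one, max_eq_left hl.le]

lemma mul_tangentPoint (hα0 : α ≠ 0) (hα1 : α ≠ 1) (l : ℝ) :
    l * tangentPoint α l = tangentPoint α l ^ α := by
  rcases le_or_gt l 0 with hl | hl
  · rw [tangentPoint_of_nonpos hα1 hl, mul_zero, zero_rpow hα0]
  · nth_rw 1 [← tangentPoint_rpow_sub_one hα1 hl]
    rw [← rpow_add_one (tangentPoint_pos hl).ne', sub_add_cancel]

lemma tangentPoint_rpow_sub_one_mul (hα1 : α ≠ 1) {c : ℝ} (hc : 0 < c) (l : ℝ) :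
    tangentPoint α (c ^ (α - 1) * l) = c * tangentPoint α l := by
  have hcα : 0 ≤ c ^ (α - 1) := rpow_nonneg hc.le _
  rw [tangentPoint, ← mul_zero (c ^ (α - 1)), ← mul_max_of_nonneg _ _ hcα,
    mul_rpow hcα (le_max_right l 0), ← rpow_mul hc.le,
    mul_one_div_cancel (sub_ne_zero.mpr hα1), rpow_one, tangentPoint]

lemma one_sub_mul_bernoulli_pos (hα0 : 0 < α) (hα1 : α ≠ 1) {u : ℝ} (hu : 0 ≤ u) (hu1 : u ≠ 1) :
    0 < (1 - α) * (1 + α * (u - 1) - u ^ α) := by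
  have hs : -1 ≤ u - 1 := by linarith
  have hs0 : u - 1 ≠ 0 := sub_ne_zero.mpr hu1
  rcases lt_or_gt_of_ne hα1 with h | h
  · have := rpow_one_add_lt_one_add_mul_self hs hs0 hα0 h
    rw [add_sub_cancel] at this
    exact mul_pos (sub_pos.mpr h) (sub_pos.mpr this)
  · have := one_add_mul_self_lt_rpow_one_add hs hs0 h
    rw [add_sub_cancel] at this
    exact mul_pos_of_neg_of_neg (sub_neg.mpr h) (sub_neg.mpr this)

lemma tangentGap_mul_tangentPoint (hα0 : α ≠ 0) (hα1 : α ≠ 1) (l : ℝ) {u : ℝ} (hu : 0 ≤ u) :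
    tangentGap α l (u * tangentPoint α l) =
      tangentPoint α l ^ α * ((1 - α) * (1 + α * (u - 1) - u ^ α)) := by
  rw [tangentGap, mul_rpow hu tangentPoint_nonneg, mul_left_comm l u,
    mul_tangentPoint hα0 hα1]
  ring

lemma tangentGap_tangentPoint (hα0 : α ≠ 0) (hα1 : α ≠ 1) (l : ℝ) :
    tangentGap α l (tangentPoint α l) = 0 := by
  simpa using tangentGap_mul_tangentPoint hα0 hα1 l zero_le_one

lemma tangentGap_pos (hα0 : 0 < α) (hα1 : α ≠ 1) (hl : α < 1 → 0 < l) (hs : 0 ≤ s)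
    (hne : s ≠ tangentPoint α l) : 0 < tangentGap α l s := by
  rcases le_or_gt l 0 with hl0 | hl0
  · have hα : 1 < α := (not_lt.mp fun h => hl0.not_gt (hl h)).lt_of_ne' hα1
    rw [tangentPoint_of_nonpos hα1 hl0] at hne
    have hsα : 0 < s ^ α := rpow_pos_of_pos (hs.lt_of_ne' hne) α
    have hls : α * (l * s) ≤ 0 :=
      mul_nonpos_of_nonneg_of_nonpos hα0.le (mul_nonpos_of_nonpos_of_nonneg hl0 hs)
    rw [tangentGap, tangentPoint_of_nonpos hα1 hl0, zero_rpow hα0.ne', mul_zero]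
    exact mul_pos_of_neg_of_neg (sub_neg.mpr hα) (by linarith)
  · have ht : 0 < tangentPoint α l := tangentPoint_pos hl0
    obtain ⟨u, rfl⟩ : ∃ u, s = u * tangentPoint α l := ⟨_, (div_mul_cancel₀ s ht.ne').symm⟩
    have hu : 0 ≤ u := nonneg_of_mul_nonneg_left hs ht
    have hu1 : u ≠ 1 := fun h => hne (by rw [h, one_mul])
    rw [tangentGap_mul_tangentPoint hα0.ne' hα1 l hu]
    exact mul_pos (rpow_pos_of_pos ht α) (one_sub_mul_bernoulli_pos hα0 hα1 hu hu1)

lemma tangentGap_eq_zero_iff (hα0 : 0 < α) (hα1 : α ≠ 1) (hl : α < 1 → 0 < l) (hs : 0 ≤ s) :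
    tangentGap α l s = 0 ↔ s = tangentPoint α l := by
  refine ⟨fun h => ?_, fun h => h ▸ tangentGap_tangentPoint hα0.ne' hα1 l⟩
  by_contra hne
  exact (tangentGap_pos hα0 hα1 hl hs hne).ne' h

lemma tangentGap_nonneg (hα0 : 0 < α) (hα1 : α ≠ 1) (hl : α < 1 → 0 < l) (hs : 0 ≤ s) :
    0 ≤ tangentGap α l s := by
  by_cases h : s = tangentPoint α l
  · exact ((tangentGap_eq_zero_iff hα0 hα1 hl hs).mpr h).ge
  · exact (tangentGap_pos hα0 hα1 hl hs h).le

end TangentLine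

section RenyiEntropy

variable {Ω : Type*} [MeasurableSpace Ω] {ν : Measure Ω} {α : ℝ} {f g L : Ω → ℝ}

/-- The Rényi entropy of order `α` of a density `f` with respect to `ν`. -/
noncomputable def renyiEntropy (α : ℝ) (ν : Measure Ω) (f : Ω → ℝ) : ℝ :=
  1 / (1 - α) * log (∫ x, f x ^ α ∂ν)

lemma renyiEntropy_le_iff (hα1 : α ≠ 1) (hf : 0 < ∫ x, f x ^ α ∂ν) (hg : 0 < ∫ x, g x ^ α ∂ν) :
    renyiEntropy α ν f ≤ renyiEntropy α ν g ↔
      (1 - α) * ∫ x, f x ^ α ∂ν ≤ (1 - α) * ∫ x, g x ^ α ∂ν := by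
  rcases lt_or_gt_of_ne hα1 with h | h
  · have hα : 0 < 1 - α := sub_pos.mpr h
    rw [renyiEntropy, renyiEntropy, mul_le_mul_iff_of_pos_left (one_div_pos.mpr hα),
      log_le_log_iff hf hg, mul_le_mul_iff_of_pos_left hα]
  · have hα : 1 - α < 0 := sub_neg.mpr h
    rw [renyiEntropy, renyiEntropy, mul_le_mul_left_of_neg (one_div_neg.mpr hα),
      log_le_log_iff hg hf, mul_le_mul_left_of_neg hα]

lemma renyiEntropy_eq_iff (hα1 : α ≠ 1) (hf : 0 < ∫ x, f x ^ α ∂ν) (hg : 0 < ∫ x, g x ^ α ∂ν) :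
    renyiEntropy α ν f = renyiEntropy α ν g ↔ ∫ x, f x ^ α ∂ν = ∫ x, g x ^ α ∂ν := by
  rw [renyiEntropy, renyiEntropy,
    mul_right_inj' (one_div_ne_zero (sub_ne_zero.mpr hα1.symm)), log_injOn_pos.eq_iff hf hg]

lemma integral_rpow_pos_s6 (hα0 : α ≠ 0) (hf : 0 ≤ᵐ[ν] f) (hfα : Integrable (fun x => f x ^ α) ν)
    (hne : ¬ f =ᵐ[ν] 0) : 0 < ∫ x, f x ^ α ∂ν := by
  have hfα0 : 0 ≤ᵐ[ν] fun x => f x ^ α := hf.mono fun x hx => rpow_nonneg hx α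
  refine (integral_nonneg_of_ae hfα0).lt_of_ne' fun h => hne ?_
  filter_upwards [hf, (integral_eq_zero_iff_of_nonneg_ae hfα0 hfα).mp h] with x hx hxα
  exact (rpow_eq_zero hx hα0).mp hxα

lemma integrable_tangentGap (hfα : Integrable (fun x => f x ^ α) ν)
    (hLf : Integrable (fun x => L x * f x) ν)
    (hLα : Integrable (fun x => tangentPoint α (L x) ^ α) ν) :
    Integrable (fun x => tangentGap α (L x) (f x)) ν :=
  (((hLα.const_mul _).add (hLf.const_mul _)).sub hfα).const_mul _

lemma integral_tangentGap (hα0 : α ≠ 0) (hα1 : α ≠ 1) (hfα : Integrable (fun x => f x ^ α) ν)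
    (hLf : Integrable (fun x => L x * f x) ν)
    (hLα : Integrable (fun x => tangentPoint α (L x) ^ α) ν)
    (hmoment : ∫ x, L x * f x ∂ν = ∫ x, L x * tangentPoint α (L x) ∂ν) :
    ∫ x, tangentGap α (L x) (f x) ∂ν =
      (1 - α) * (∫ x, tangentPoint α (L x) ^ α ∂ν - ∫ x, f x ^ α ∂ν) := by
  simp only [mul_tangentPoint hα0 hα1] at hmoment
  simp only [tangentGap]
  have hlinear : Integrable (fun x => (1 - α) * tangentPoint α (L x) ^ α + α * (L x * f x)) ν :=
    (hLα.const_mul _).add (hLf.const_mul _)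
  rw [integral_const_mul, integral_sub hlinear hfα,
    integral_add (hLα.const_mul _) (hLf.const_mul _), integral_const_mul, integral_const_mul,
    hmoment]
  ring

theorem renyiEntropy_le_tangentPoint_and_eq_iff (hα0 : 0 < α) (hα1 : α ≠ 1)
    (hL : ∀ᵐ x ∂ν, α < 1 → 0 < L x) (hf : 0 ≤ᵐ[ν] f)
    (hfα : Integrable (fun x => f x ^ α) ν) (hLf : Integrable (fun x => L x * f x) ν)
    (hLα : Integrable (fun x => tangentPoint α (L x) ^ α) ν)
    (hLα0 : 0 < ∫ x, tangentPoint α (L x) ^ α ∂ν)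
    (hmoment : ∫ x, L x * f x ∂ν = ∫ x, L x * tangentPoint α (L x) ∂ν) :
    renyiEntropy α ν f ≤ renyiEntropy α ν (fun x => tangentPoint α (L x)) ∧
    (renyiEntropy α ν f = renyiEntropy α ν (fun x => tangentPoint α (L x)) ↔
      f =ᵐ[ν] fun x => tangentPoint α (L x)) := by
  have hne : ¬ f =ᵐ[ν] 0 := fun h => by
    have hLf0 : ∫ x, L x * f x ∂ν = 0 := integral_eq_zero_of_ae <| h.mono fun x hx => by simp [hx]
    simp only [hmoment, mul_tangentPoint hα0.ne' hα1] at hLf0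
    exact hLα0.ne' hLf0
  have hfα0 := integral_rpow_pos_s6 hα0.ne' hf hfα hne
  have hgap : 0 ≤ᵐ[ν] fun x => tangentGap α (L x) (f x) := by
    filter_upwards [hL, hf] with x hLx hfx using tangentGap_nonneg hα0 hα1 hLx hfx
  have hint := integral_tangentGap hα0.ne' hα1 hfα hLf hLα hmoment
  rw [renyiEntropy_le_iff hα1 hfα0 hLα0, renyiEntropy_eq_iff hα1 hfα0 hLα0, ← sub_nonneg,
    ← mul_sub, ← hint]
  refine ⟨integral_nonneg_of_ae hgap, fun h => ?_, fun h => ?_⟩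
  · rw [h, sub_self, mul_zero,
      integral_eq_zero_iff_of_nonneg_ae hgap (integrable_tangentGap hfα hLf hLα)] at hint
    filter_upwards [hint, hL, hf] with x hx hLx hfx
    exact (tangentGap_eq_zero_iff hα0 hα1 hLx hfx).mp hx
  · exact integral_congr_ae <| h.mono fun x hx => by simp only [hx]

end RenyiEntropy

section AffineIntegrals

variable {a b q : ℝ}

lemma hasDerivAt_add_mul_rpow (hb : b ≠ 0) (hq : q + 1 ≠ 0) {x : ℝ} (hx : a + b * x ≠ 0) :
    HasDerivAt (fun y => (a + b * y) ^ (q + 1) / (b * (q + 1))) ((a + b * x) ^ q) x := by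
  have hlin : HasDerivAt (fun y : ℝ => a + b * y) b x := by
    simpa using ((hasDerivAt_id x).const_mul b).const_add a
  have := (hlin.rpow_const (p := q + 1) (Or.inl hx)).div_const (b * (q + 1))
  rwa [add_sub_cancel_right, mul_div_cancel_left₀ _ (mul_ne_zero hb hq)] at this

lemma integrableOn_and_integral_Ioi_max_add_mul_rpow_of_pos (ha : 0 < a) (hb : 0 < b)
    (hq : q < -1) :
    IntegrableOn (fun x => (max (a + b * x) 0) ^ q) (Ioi 0) ∧
    ∫ x in Ioi 0, (max (a + b * x) 0) ^ q = -a ^ (q + 1) / (b * (q + 1)) := by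
  have hderiv : ∀ x ∈ Ici (0 : ℝ), HasDerivAt (fun y => (a + b * y) ^ (q + 1) / (b * (q + 1)))
      ((max (a + b * x) 0) ^ q) x := fun x hx => by
    have hpos : 0 < a + b * x := add_pos_of_pos_of_nonneg ha (mul_nonneg hb.le hx)
    rw [max_eq_left hpos.le]
    exact hasDerivAt_add_mul_rpow hb.ne' (by linarith) hpos.ne'
  have hnonneg : ∀ x ∈ Ioi (0 : ℝ), 0 ≤ (max (a + b * x) 0) ^ q :=
    fun x _ => rpow_nonneg (le_max_right _ _) q
  have hlim : Tendsto (fun x => (a + b * x) ^ (q + 1) / (b * (q + 1))) atTop (𝓝 0) := by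
    have hlin : Tendsto (fun x => a + b * x) atTop atTop :=
      tendsto_atTop_add_const_left _ _ (tendsto_id.const_mul_atTop hb)
    have hrpow := (tendsto_rpow_neg_atTop (y := -(q + 1)) (by linarith)).comp hlin
    simpa using hrpow.div_const (b * (q + 1))
  refine ⟨integrableOn_Ioi_deriv_of_nonneg' hderiv hnonneg hlim, ?_⟩
  rw [integral_Ioi_of_hasDerivAt_of_nonneg' hderiv hnonneg hlim, mul_zero, add_zero, zero_sub,
    neg_div]

lemma integrableOn_and_integral_Ioi_max_add_mul_rpow_of_neg (ha : 0 < a) (hb : b < 0) (hq : 0 < q) :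
    IntegrableOn (fun x => (max (a + b * x) 0) ^ q) (Ioi 0) ∧
    ∫ x in Ioi 0, (max (a + b * x) 0) ^ q = -a ^ (q + 1) / (b * (q + 1)) := by
  have hend : 0 ≤ -a / b := div_nonneg_of_nonpos (by linarith) hb.le
  have hroot : a + b * (-a / b) = 0 := by rw [mul_div_cancel₀ _ hb.ne, add_neg_cancel]
  have hcont : Continuous fun x => (max (a + b * x) 0) ^ q :=
    Continuous.rpow_const (by fun_prop) fun _ => Or.inr hq.le
  have hzero : ∀ x ∈ Ioi (0 : ℝ) \ Ioc 0 (-a / b), (max (a + b * x) 0) ^ q = 0 := by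
    rintro x ⟨hx, hx'⟩
    have hlt : -a / b < x := not_le.mp fun h => hx' ⟨hx, h⟩
    have hle : a + b * x ≤ a + b * (-a / b) := by
      linarith only [mul_le_mul_of_nonpos_left hlt.le hb.le]
    rw [max_eq_right (hle.trans_eq hroot), zero_rpow hq.ne']
  refine ⟨hcont.integrableOn_Ioc.of_forall_sdiff_eq_zero measurableSet_Ioi hzero, ?_⟩
  rw [setIntegral_eq_of_subset_of_forall_sdiff_eq_zero measurableSet_Ioi Ioc_subset_Ioi_self hzero,
    ← intervalIntegral.integral_of_le hend,
    intervalIntegral.integral_comp_add_mul (fun y => (max y 0) ^ q) hb.ne, mul_zero, add_zero,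
    hroot, intervalIntegral.integral_symm,
    intervalIntegral.integral_congr (g := fun y => y ^ q) fun y hy => by
      rw [uIcc_of_le ha.le] at hy; simp only [max_eq_left hy.1],
    integral_rpow (Or.inl (by linarith)), zero_rpow (by linarith), smul_eq_mul]
  field_simp
  ring

end AffineIntegrals

section AlphaExponential

variable {α μ : ℝ} {f : ℝ → ℝ}

/-- The affine function of `x` whose `tangentPoint` is the α-exponential profile. It is the
constraint function `L` of `renyiEntropy_le_tangentPoint_and_eq_iff`, up to a constant factor. -/
noncomputable def alphaExpAffine (α μ x : ℝ) : ℝ :=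
  1 + (1 - α) / (2 * α - 1) * x / μ

/-- The α-exponential profile with mean `μ`, an unnormalized density on `(0, ∞)`. -/
noncomputable def alphaExp (α μ x : ℝ) : ℝ :=
  tangentPoint α (alphaExpAffine α μ x)

/-- The normalizing constant of `alphaExp α μ`. -/
noncomputable def alphaExpScale (α μ : ℝ) : ℝ :=
  α / (μ * (2 * α - 1))

/-- The α-exponential probability density on `(0, ∞)` with mean `μ`. -/
noncomputable def alphaExpDensity (α μ x : ℝ) : ℝ :=
  alphaExpScale α μ * alphaExp α μ x

lemma alphaExpScale_pos (hα : 1 / 2 < α) (hμ : 0 < μ) : 0 < alphaExpScale α μ :=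
  div_pos (by linarith) (mul_pos hμ (by linarith))

lemma alphaExpScale_mul (hμ : μ ≠ 0) : alphaExpScale α μ * μ = α / (2 * α - 1) := by
  rw [alphaExpScale, mul_comm μ, ← div_div, div_mul_cancel₀ _ hμ]

lemma alphaExpAffine_pos (hα : 1 / 2 < α) (hα1 : α < 1) (hμ : 0 < μ) {x : ℝ} (hx : 0 < x) :
    0 < alphaExpAffine α μ x := by
  have h2α : 0 < 2 * α - 1 := by linarith
  exact add_pos one_pos (div_pos (mul_pos (div_pos (sub_pos.mpr hα1) h2α) hx) hμ)

lemma integrable_and_integral_alphaExpAffine_mul {ν : Measure ℝ} (hα : 2 * α - 1 ≠ 0) (hμ : μ ≠ 0)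
    (hfi : Integrable f ν) (hf1 : ∫ x, f x ∂ν = 1) (hxf : Integrable (fun x => x * f x) ν)
    (hfμ : ∫ x, x * f x ∂ν = μ) :
    Integrable (fun x => alphaExpAffine α μ x * f x) ν ∧
    ∫ x, alphaExpAffine α μ x * f x ∂ν = α / (2 * α - 1) := by
  have hsplit (x : ℝ) : alphaExpAffine α μ x * f x =
      f x + (1 - α) / (2 * α - 1) / μ * (x * f x) := by
    rw [alphaExpAffine]
    ring
  simp only [hsplit]
  refine ⟨hfi.add (hxf.const_mul _), ?_⟩
  rw [integral_add hfi (hxf.const_mul _), integral_const_mul, hf1, hfμ, div_mul_cancel₀ _ hμ,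
    one_add_div hα]
  ring

lemma integrableOn_and_integral_alphaExp_rpow (hα : 1 / 2 < α) (hα1 : α ≠ 1) (hμ : 0 < μ)
    {p : ℝ} (hp : 0 < p) (hpα : 1 - α < p) :
    IntegrableOn (fun x => alphaExp α μ x ^ p) (Ioi 0) ∧
    ∫ x in Ioi 0, alphaExp α μ x ^ p = μ * (2 * α - 1) / (p + α - 1) := by
  have h2α : 0 < 2 * α - 1 := by linarith
  have hvalue : -1 ^ (p / (α - 1) + 1) / ((1 - α) / (2 * α - 1) / μ * (p / (α - 1) + 1)) =
      μ * (2 * α - 1) / (p + α - 1) := by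
    have hsub_one : α - 1 ≠ 0 := sub_ne_zero.mpr hα1
    have hone_sub : 1 - α ≠ 0 := sub_ne_zero.mpr hα1.symm
    have hpα' : p + α - 1 ≠ 0 := by linarith
    rw [one_rpow, div_add_one hsub_one, ← add_sub_assoc]
    field_simp
    ring
  have hslope (x : ℝ) : alphaExpAffine α μ x = 1 + (1 - α) / (2 * α - 1) / μ * x := by
    rw [alphaExpAffine]
    ring
  simp only [alphaExp, tangentPoint_rpow, hslope]
  rw [← hvalue]
  rcases lt_or_gt_of_ne hα1 with h | h
  · refine integrableOn_and_integral_Ioi_max_add_mul_rpow_of_pos one_pos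
      (div_pos (div_pos (sub_pos.mpr h) h2α) hμ) ?_
    rw [div_lt_iff_of_neg (sub_neg.mpr h)]
    linarith
  · exact integrableOn_and_integral_Ioi_max_add_mul_rpow_of_neg one_pos
      (div_neg_of_neg_of_pos (div_neg_of_neg_of_pos (sub_neg.mpr h) h2α) hμ)
      (div_pos hp (sub_pos.mpr h))

lemma integral_alphaExp (hα : 1 / 2 < α) (hα1 : α ≠ 1) (hμ : 0 < μ) :
    ∫ x in Ioi 0, alphaExp α μ x = μ * (2 * α - 1) / α := by
  simpa using (integrableOn_and_integral_alphaExp_rpow hα hα1 hμ one_pos (by linarith)).2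

lemma alphaExpDensity_rpow (hα : 1 / 2 < α) (hμ : 0 < μ) (p x : ℝ) :
    alphaExpDensity α μ x ^ p = alphaExpScale α μ ^ p * alphaExp α μ x ^ p :=
  mul_rpow (alphaExpScale_pos hα hμ).le tangentPoint_nonneg

lemma integrableOn_and_integral_alphaExpDensity_rpow (hα : 1 / 2 < α) (hα1 : α ≠ 1) (hμ : 0 < μ) :
    IntegrableOn (fun x => alphaExpDensity α μ x ^ α) (Ioi 0) ∧
    ∫ x in Ioi 0, alphaExpDensity α μ x ^ α = alphaExpScale α μ ^ α * μ := by
  obtain ⟨hint, hvalue⟩ :=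
    integrableOn_and_integral_alphaExp_rpow hα hα1 hμ (p := α) (by linarith) (by linarith)
  simp only [alphaExpDensity_rpow hα hμ]
  refine ⟨hint.const_mul _, ?_⟩
  rw [integral_const_mul, hvalue, ← two_mul, mul_div_cancel_right₀ _ (by linarith)]

lemma renyiEntropy_alphaExpDensity (hα : 1 / 2 < α) (hα1 : α ≠ 1) (hμ : 0 < μ) :
    renyiEntropy α (volume.restrict (Ioi 0)) (alphaExpDensity α μ) =
      log μ + α / (1 - α) * log (α / (2 * α - 1)) := by
  have hc := alphaExpScale_pos hα hμ
  have hone_sub : 1 - α ≠ 0 := sub_ne_zero.mpr hα1.symm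
  rw [renyiEntropy, (integrableOn_and_integral_alphaExpDensity_rpow hα hα1 hμ).2,
    ← alphaExpScale_mul hμ.ne', log_mul (rpow_pos_of_pos hc α).ne' hμ.ne', log_rpow hc,
    log_mul hc.ne' hμ.ne']
  field_simp
  ring

lemma exists_ae_eq_const_mul_alphaExp_iff (hα : 1 / 2 < α) (hα1 : α ≠ 1) (hμ : 0 < μ)
    (hf1 : ∫ x in Ioi 0, f x = 1) :
    (∃ c > 0, f =ᵐ[volume.restrict (Ioi 0)] fun x => c * alphaExp α μ x) ↔
      f =ᵐ[volume.restrict (Ioi 0)] alphaExpDensity α μ := by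
  refine ⟨fun ⟨c, _, hfc⟩ => ?_, fun h => ⟨_, alphaExpScale_pos hα hμ, h⟩⟩
  have hc : c = alphaExpScale α μ := by
    rw [integral_congr_ae hfc, integral_const_mul, integral_alphaExp hα hα1 hμ] at hf1
    rw [alphaExpScale, eq_one_div_of_mul_eq_one_left hf1, one_div_div]
  rwa [hc] at hfc

lemma integral_Ioi_id_mul_pos (hf0 : 0 ≤ᵐ[volume.restrict (Ioi 0)] f)
    (hxf : IntegrableOn (fun x => x * f x) (Ioi 0)) (hf1 : ∫ x in Ioi 0, f x ≠ 0) :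
    0 < ∫ x in Ioi 0, x * f x := by
  have hx0 : ∀ᵐ x ∂volume.restrict (Ioi (0 : ℝ)), 0 < x := ae_restrict_mem measurableSet_Ioi
  have hxf0 : 0 ≤ᵐ[volume.restrict (Ioi 0)] fun x => x * f x := by
    filter_upwards [hx0, hf0] with x hx hfx using mul_nonneg hx.le hfx
  refine (integral_nonneg_of_ae hxf0).lt_of_ne' fun h => hf1 (integral_eq_zero_of_ae ?_)
  filter_upwards [hx0, (integral_eq_zero_iff_of_nonneg_ae hxf0 hxf).mp h] with x hx hxfx
  exact (mul_eq_zero.mp hxfx).resolve_left hx.ne'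

theorem renyiEntropy_le_alphaExpDensity_and_eq_iff (hα : 1 / 2 < α) (hα1 : α ≠ 1) (hμ : 0 < μ)
    (hf0 : 0 ≤ᵐ[volume.restrict (Ioi 0)] f) (hfi : IntegrableOn f (Ioi 0))
    (hf1 : ∫ x in Ioi 0, f x = 1) (hfα : IntegrableOn (fun x => f x ^ α) (Ioi 0))
    (hxf : IntegrableOn (fun x => x * f x) (Ioi 0)) (hfμ : ∫ x in Ioi 0, x * f x = μ) :
    renyiEntropy α (volume.restrict (Ioi 0)) f ≤
      renyiEntropy α (volume.restrict (Ioi 0)) (alphaExpDensity α μ) ∧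
    (renyiEntropy α (volume.restrict (Ioi 0)) f =
        renyiEntropy α (volume.restrict (Ioi 0)) (alphaExpDensity α μ) ↔
      f =ᵐ[volume.restrict (Ioi 0)] alphaExpDensity α μ) := by
  have hα0 : 0 < α := by linarith
  have h2α : 2 * α - 1 ≠ 0 := by linarith
  have hc := alphaExpScale_pos hα hμ
  have hdensity : alphaExpDensity α μ =
      fun x => tangentPoint α (alphaExpScale α μ ^ (α - 1) * alphaExpAffine α μ x) :=
    funext fun x => (tangentPoint_rpow_sub_one_mul hα1 hc _).symm
  obtain ⟨hLf, hLf_value⟩ :=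
    integrable_and_integral_alphaExpAffine_mul h2α hμ.ne' hfi hf1 hxf hfμ
  obtain ⟨hgα, hgα_value⟩ := integrableOn_and_integral_alphaExpDensity_rpow hα hα1 hμ
  rw [hdensity] at hgα hgα_value ⊢
  refine renyiEntropy_le_tangentPoint_and_eq_iff hα0 hα1 ?_ hf0 hfα ?_ hgα ?_ ?_
  · filter_upwards [ae_restrict_mem measurableSet_Ioi] with x hx h
    exact mul_pos (rpow_pos_of_pos hc _) (alphaExpAffine_pos hα h hμ hx)
  · simpa only [mul_assoc] using hLf.const_mul _
  · exact hgα_value ▸ mul_pos (rpow_pos_of_pos hc α) hμ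
  · simp_rw [mul_tangentPoint hα0.ne' hα1, mul_assoc]
    rw [hgα_value, integral_const_mul, hLf_value, ← alphaExpScale_mul hμ.ne', ← mul_assoc,
      ← rpow_add_one hc.ne', sub_add_cancel]

end AlphaExponential

lemma ae_eq_indicator_iff_ae_eq_restrict {Ω E : Type*} [MeasurableSpace Ω] [Zero E] {ν : Measure Ω}
    {s : Set Ω} (hs : MeasurableSet s) {f g : Ω → E} (hf : ∀ᵐ x ∂ν, x ∉ s → f x = 0) :
    f =ᵐ[ν] s.indicator g ↔ f =ᵐ[ν.restrict s] g := by
  have hfs : f =ᵐ[ν] s.indicator f := hf.mono fun x hx => by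
    by_cases hxs : x ∈ s <;> simp [hxs, hx]
  rw [ae_eq_restrict_iff_indicator_ae_eq hs]
  exact ⟨hfs.symm.trans, hfs.trans⟩

/-- Maximum Rényi-entropy bound under a mean constraint: if `α > 1/2`, `α ≠ 1`, and `𝒳 > 0`
a.s. has density `f`, finite `h_α(𝒳)` and finite mean `μ`, then
`h_α(𝒳) ≤ ln μ + (α/(1-α)) ln(α/(2α-1))`, with equality iff `𝒳` is α-exponential. -/
theorem maxent_renyi_mean
    (α : ℝ) (hα : 1 / 2 < α) (hα1 : α ≠ 1)
    (f : ℝ → ℝ) (hfm : Measurable f) (hf0 : ∀ x, 0 ≤ f x)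
    (hf1 : ∫ x, f x = 1) (hfi : Integrable f)
    (hpos : ∀ᵐ x ∂(volume : Measure ℝ), x ≤ 0 → f x = 0)
    (hfα : Integrable (fun x => f x ^ α))
    (μ : ℝ) (hμ : μ = ∫ x, x * f x) (hμi : Integrable (fun x => x * f x)) :
    (1 / (1 - α)) * Real.log (∫ x, f x ^ α) ≤
      Real.log μ + (α / (1 - α)) * Real.log (α / (2 * α - 1)) ∧
    ((1 / (1 - α)) * Real.log (∫ x, f x ^ α) =
        Real.log μ + (α / (1 - α)) * Real.log (α / (2 * α - 1)) ↔
      ∃ c > 0, f =ᵐ[volume] Set.indicator (Set.Ioi (0 : ℝ))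
        (fun x => c * (max (1 + (1 - α) / (2 * α - 1) * x / μ) 0) ^ (1 / (α - 1)))) := by
  have hsupp : ∀ᵐ x, x ∉ Ioi (0 : ℝ) → f x = 0 := hpos.mono fun x hx h => hx (not_lt.mp h)
  have hhalf (g : ℝ → ℝ) (hg : ∀ x, f x = 0 → g x = 0) : ∫ x in Ioi 0, g x = ∫ x, g x :=
    setIntegral_eq_integral_of_ae_compl_eq_zero <| hsupp.mono fun x hx h => hg x (hx h)
  have hfα_half := hhalf (fun x => f x ^ α) fun x hx => by
    rw [hx, zero_rpow (by linarith)]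
  have hf1_half : ∫ x in Ioi 0, f x = 1 := (hhalf f fun _ => id).trans hf1
  have hμ_half : ∫ x in Ioi 0, x * f x = μ :=
    (hhalf _ fun x hx => by rw [hx, mul_zero]).trans hμ.symm
  have hf0_half : 0 ≤ᵐ[volume.restrict (Ioi 0)] f := .of_forall hf0
  have hμ0 : 0 < μ :=
    hμ_half ▸ integral_Ioi_id_mul_pos hf0_half hμi.integrableOn (hf1_half ▸ one_ne_zero)
  have hmax := renyiEntropy_le_alphaExpDensity_and_eq_iff hα hα1 hμ0 hf0_half hfi.integrableOn
    hf1_half hfα.integrableOn hμi.integrableOn hμ_half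
  rw [renyiEntropy_alphaExpDensity hα hα1 hμ0, renyiEntropy, hfα_half,
    ← exists_ae_eq_const_mul_alphaExp_iff hα hα1 hμ0 hf1_half] at hmax
  simp only [ae_eq_indicator_iff_ae_eq_restrict measurableSet_Ioi hsupp]
  exact hmax
end

section
/- Massey's inequality: let X be an integer-valued random variable with finite variance σ². Then H(X) < (1/2) ln( 2πe(σ² + 1/12) ). -/
open MeasureTheory Real

/-!
Let `f` be a positive continuous probability density on `ℝ`. By the continuous AM–GM inequality, the
geometric mean of `f` over the unit cell centred at an integer is at most the mass of that cell, so
these geometric means have total mass less than `1`: equality would force `f` to be constant. Gibbs'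
inequality against these weights bounds the entropy of `p` by `-∑ k, p k * m k`, where `m k` is the
mean of `log f` over the cell centred at `k`. For the Gaussian density of mean `μ` and variance
`v = σ² + 1/12`, the mean of `(x - μ)²` over a cell is `(k - μ)² + 1/12`, and averaging over `p`
gives `(log (2πv) + 1) / 2`.
-/

section Gibbs

variable {ι : Type*} {p r : ι → ℝ}

lemma mul_log_one_div_le {x y : ℝ} (hx : 0 ≤ x) (hy : 0 < y) :
    x * log (1 / x) ≤ x * log (1 / y) + (y - x) := by
  rcases hx.eq_or_lt with rfl | hx
  · simpa using hy.le
  · have hratio : x * log (y / x) ≤ x * (y / x - 1) := by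
      gcongr
      exact log_le_sub_one_of_pos (div_pos hy hx)
    rw [log_div hy.ne' hx.ne', mul_sub, mul_sub, mul_div_cancel₀ _ hx.ne'] at hratio
    simp only [one_div, log_inv]
    linarith

lemma tsum_mul_log_one_div_le (hp0 : ∀ i, 0 ≤ p i) (hp1 : HasSum p 1) (hr0 : ∀ i, 0 < r i)
    (hr : Summable r) (hpr : Summable fun i => p i * log (1 / r i)) :
    ∑' i, p i * log (1 / p i) ≤ ∑' i, p i * log (1 / r i) + (∑' i, r i - 1) := by
  have hterm (i : ι) : p i * log (1 / p i) ≤ p i * log (1 / r i) + (r i - p i) :=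
    mul_log_one_div_le (hp0 i) (hr0 i)
  have hnonneg (i : ι) : 0 ≤ p i * log (1 / p i) := by
    rw [one_div, log_inv]
    exact mul_nonneg (hp0 i) <| neg_nonneg.2 <|
      log_nonpos (hp0 i) (le_hasSum hp1 i fun j _ => hp0 j)
  have hbound := hpr.hasSum.add (hr.hasSum.sub hp1)
  exact hasSum_le hterm (Summable.of_nonneg_of_le hnonneg hterm hbound.summable).hasSum hbound

end Gibbs

section GeometricMean

variable {α : Type*} {_ : MeasurableSpace α} {ν : Measure α} [IsFiniteMeasure ν] {f : α → ℝ}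

lemma exp_average_log_le [NeZero ν] (hpos : ∀ᵐ x ∂ν, 0 < f x) (hf : Integrable f ν)
    (hlog : Integrable (fun x => log (f x)) ν) :
    exp (⨍ x, log (f x) ∂ν) ≤ ⨍ x, f x ∂ν := by
  have hexp : (fun x => exp (log (f x))) =ᵐ[ν] f := hpos.mono fun x hx => exp_log hx
  rw [← average_congr hexp]
  exact convexOn_exp.map_average_le continuousOn_exp isClosed_univ (by simp) hlog
    (hf.congr hexp.symm)

lemma ae_eq_const_or_exp_average_log_lt (hpos : ∀ᵐ x ∂ν, 0 < f x) (hf : Integrable f ν)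
    (hlog : Integrable (fun x => log (f x)) ν) :
    (∃ c, f =ᵐ[ν] fun _ => c) ∨ exp (⨍ x, log (f x) ∂ν) < ⨍ x, f x ∂ν := by
  have hexp : (fun x => exp (log (f x))) =ᵐ[ν] f := hpos.mono fun x hx => exp_log hx
  rw [← average_congr hexp]
  refine (strictConvexOn_exp.ae_eq_const_or_map_average_lt continuousOn_exp isClosed_univ (by simp)
    hlog (hf.congr hexp.symm)).imp_left fun hconst => ⟨exp (⨍ x, log (f x) ∂ν), ?_⟩
  filter_upwards [hexp, hconst] with x hx hlogx
  rw [← hx, hlogx, Function.const_apply]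

end GeometricMean

section UnitCell

open Set

/-- The closed interval of length `1` centred at `c`; the cells centred at the integers tile `ℝ`
up to endpoints. -/
def unitCell (c : ℝ) : Set ℝ := Icc (c - 1 / 2) (c + 1 / 2)

/-- The mean of `log f` over the unit cell centred at `c`, that is, the logarithm of the geometric
mean of `f` over that cell. Since the cell has measure `1`, no normalization is needed. -/
noncomputable def cellLogMean (f : ℝ → ℝ) (c : ℝ) : ℝ :=
  ∫ x in unitCell c, log (f x)

variable {f : ℝ → ℝ}

instance isProbabilityMeasure_restrict_unitCell (c : ℝ) :
    IsProbabilityMeasure (volume.restrict (unitCell c)) :=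
  ⟨by norm_num [unitCell]⟩

lemma integral_unitCell_eq_intervalIntegral (f : ℝ → ℝ) (c : ℝ) :
    ∫ x in unitCell c, f x = ∫ x in (c - 1 / 2)..(c + 1 / 2), f x := by
  rw [unitCell, integral_Icc_eq_integral_Ioc, intervalIntegral.integral_of_le (by linarith)]

lemma integrableOn_unitCell (hf : Continuous f) (c : ℝ) : IntegrableOn f (unitCell c) :=
  hf.integrableOn_Icc

lemma hasSum_integral_unitCell (hf : Integrable f) :
    HasSum (fun k : ℤ => ∫ x in unitCell k, f x) (∫ x, f x) := by
  have hcell (k : ℤ) : ∫ x in unitCell k, f x = ∫ x in (-1 / 2 + k : ℝ)..(-1 / 2 + k + 1), f x := by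
    rw [integral_unitCell_eq_intervalIntegral]
    congr 1 <;> ring
  simpa only [hcell] using hf.hasSum_intervalIntegral (-1 / 2)

lemma exp_cellLogMean_le (hf : Continuous f) (hpos : ∀ x, 0 < f x) (c : ℝ) :
    exp (cellLogMean f c) ≤ ∫ x in unitCell c, f x := by
  simpa only [cellLogMean, average_eq_integral] using exp_average_log_le (ae_of_all _ hpos)
    (integrableOn_unitCell hf c) (integrableOn_unitCell (hf.log fun x => (hpos x).ne') c)

lemma exp_cellLogMean_lt (hf : Continuous f) (hpos : ∀ x, 0 < f x) {c : ℝ}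
    (hne : ∃ x ∈ unitCell c, f x ≠ f c) :
    exp (cellLogMean f c) < ∫ x in unitCell c, f x := by
  rcases ae_eq_const_or_exp_average_log_lt (ae_of_all _ hpos) (integrableOn_unitCell hf c)
    (integrableOn_unitCell (hf.log fun x => (hpos x).ne') c) with ⟨y, hy⟩ | hlt
  · have hconst : EqOn f (fun _ => y) (unitCell c) :=
      Measure.eqOn_Icc_of_ae_eq volume (by linarith) hy hf.continuousOn continuousOn_const
    obtain ⟨x, hx, hxc⟩ := hne
    have hc : c ∈ unitCell c := ⟨by linarith, by linarith⟩
    exact absurd ((hconst hx).trans (hconst hc).symm) hxc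
  · simpa only [cellLogMean, average_eq_integral] using hlt

lemma exists_int_exists_unitCell_ne (hf : Integrable f) (hf0 : f 0 ≠ 0) :
    ∃ k : ℤ, ∃ x ∈ unitCell k, f x ≠ f k := by
  by_contra! hcell
  have hperiodic : Function.Periodic (fun k : ℤ => f k) 1 := fun k => by
    have hleft := hcell k (k + 1 / 2) ⟨by linarith, le_rfl⟩
    have hright := hcell (k + 1) (k + 1 / 2) (by constructor <;> push_cast <;> linarith)
    exact hright.symm.trans hleft
  have hconst (x : ℝ) : f x = f 0 := by
    have hx := abs_le.1 (abs_sub_round x)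
    calc f x = f (round x : ℤ) := hcell _ x ⟨by linarith, by linarith⟩
      _ = f 0 := by simpa using hperiodic.int_mul_eq (round x)
  rw [funext hconst, integrable_const_iff_isFiniteMeasure hf0] at hf
  exact measure_ne_top volume univ Real.volume_univ

lemma summable_exp_cellLogMean (hf : Continuous f) (hpos : ∀ x, 0 < f x) (hint : Integrable f) :
    Summable fun k : ℤ => exp (cellLogMean f k) :=
  (hasSum_integral_unitCell hint).summable.of_nonneg_of_le (fun _ => (exp_pos _).le)
    fun k => exp_cellLogMean_le hf hpos k

lemma tsum_exp_cellLogMean_lt (hf : Continuous f) (hpos : ∀ x, 0 < f x) (hint : Integrable f) :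
    ∑' k : ℤ, exp (cellLogMean f k) < ∫ x, f x := by
  obtain ⟨k, hk⟩ := exists_int_exists_unitCell_ne hint (hpos 0).ne'
  exact hasSum_lt (fun j : ℤ => exp_cellLogMean_le hf hpos j) (exp_cellLogMean_lt hf hpos hk)
    (summable_exp_cellLogMean hf hpos hint).hasSum (hasSum_integral_unitCell hint)

lemma tsum_mul_log_one_div_lt_of_density {p : ℤ → ℝ} (hp0 : ∀ k, 0 ≤ p k) (hp1 : HasSum p 1)
    (hf : Continuous f) (hpos : ∀ x, 0 < f x) (hint : Integrable f) (hf1 : ∫ x, f x = 1)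
    (hpf : Summable fun k => p k * cellLogMean f k) :
    ∑' k, p k * log (1 / p k) < -∑' k, p k * cellLogMean f k := by
  have hcross (k : ℤ) :
      p k * log (1 / exp (cellLogMean f k)) = -(p k * cellLogMean f k) := by
    rw [one_div, log_inv, log_exp, mul_neg]
  have hgibbs := tsum_mul_log_one_div_le hp0 hp1 (fun k => exp_pos (cellLogMean f k))
    (summable_exp_cellLogMean hf hpos hint) (by simpa only [hcross] using hpf.neg)
  have hmass := tsum_exp_cellLogMean_lt hf hpos hint
  simp only [hcross, tsum_neg] at hgibbs
  linarith

end UnitCell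

section Gaussian

open ProbabilityTheory
open scoped NNReal

lemma integral_unitCell_sub_sq (μ c : ℝ) :
    ∫ x in unitCell c, (x - μ) ^ 2 = (c - μ) ^ 2 + 1 / 12 := by
  rw [integral_unitCell_eq_intervalIntegral,
    intervalIntegral.integral_comp_sub_right (fun x => x ^ 2) μ, integral_pow]
  push_cast
  ring

variable (μ : ℝ) {v : ℝ≥0}

lemma continuous_gaussianPDFReal (v : ℝ≥0) : Continuous (gaussianPDFReal μ v) := by
  rw [gaussianPDFReal_def]
  fun_prop

lemma log_gaussianPDFReal (hv : v ≠ 0) (x : ℝ) :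
    log (gaussianPDFReal μ v x) = -log (2 * π * v) / 2 - (x - μ) ^ 2 / (2 * v) := by
  rw [gaussianPDFReal, log_mul (by positivity) (exp_ne_zero _), log_inv, log_sqrt (by positivity),
    log_exp]
  ring

lemma cellLogMean_gaussianPDFReal (hv : v ≠ 0) (c : ℝ) :
    cellLogMean (gaussianPDFReal μ v) c =
      -log (2 * π * v) / 2 - ((c - μ) ^ 2 + 1 / 12) / (2 * v) := by
  simp only [cellLogMean, log_gaussianPDFReal μ hv]
  rw [integral_sub (integrable_const _) (integrableOn_unitCell (by fun_prop) c), integral_const,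
    integral_div, integral_unitCell_sub_sq, probReal_univ, one_smul]

lemma hasSum_mul_cellLogMean_gaussianPDFReal {p : ℤ → ℝ} {s : ℝ} (hv : v ≠ 0) (hp1 : HasSum p 1)
    (hs : HasSum (fun k : ℤ => ((k : ℝ) - μ) ^ 2 * p k) s) :
    HasSum (fun k : ℤ => p k * cellLogMean (gaussianPDFReal μ v) k)
      (-log (2 * π * v) / 2 - (s + 1 / 12) / (2 * v)) := by
  have hterm (k : ℤ) : p k * cellLogMean (gaussianPDFReal μ v) k =
      (-log (2 * π * v) / 2 - 1 / 12 / (2 * v)) * p k - (k - μ) ^ 2 * p k / (2 * v) := by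
    rw [cellLogMean_gaussianPDFReal μ hv]
    ring
  have htotal : -log (2 * π * v) / 2 - (s + 1 / 12) / (2 * v) =
      (-log (2 * π * v) / 2 - 1 / 12 / (2 * v)) * 1 - s / (2 * v) := by ring
  simpa only [hterm, htotal] using (hp1.mul_left _).sub (hs.div_const _)

end Gaussian

/-- Massey's inequality: if `X` is an integer-valued random variable with finite
variance `σ²`, then `H(X) < (1/2) ln(2πe(σ² + 1/12))`. -/
theorem massey_inequality
    (p : ℤ → ℝ) (hp0 : ∀ k, 0 ≤ p k) (hp1 : ∑' k, p k = 1)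
    (μ : ℝ) (hμ : μ = ∑' k : ℤ, (k : ℝ) * p k)
    (hμs : Summable (fun k : ℤ => (k : ℝ) * p k))
    (σ2 : ℝ) (hσ2 : σ2 = ∑' k : ℤ, ((k : ℝ) - μ) ^ 2 * p k)
    (hσ2s : Summable (fun k : ℤ => ((k : ℝ) - μ) ^ 2 * p k)) :
    (∑' k, p k * Real.log (1 / p k)) <
      (1 / 2) * Real.log (2 * π * Real.exp 1 * (σ2 + 1 / 12)) := by
  have hp : HasSum p 1 := by
    have hsummable : Summable p := by
      by_contra h
      simp [tsum_eq_zero_of_not_summable h] at hp1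
    exact hp1 ▸ hsummable.hasSum
  have hσ2_nonneg : 0 ≤ σ2 := hσ2 ▸ tsum_nonneg fun k => mul_nonneg (sq_nonneg _) (hp0 k)
  have hv_pos : 0 < σ2 + 1 / 12 := by positivity
  lift σ2 + 1 / 12 to NNReal using hv_pos.le with v hv
  have hv0 : v ≠ 0 := (NNReal.coe_pos.1 hv_pos).ne'
  have hcross := hasSum_mul_cellLogMean_gaussianPDFReal μ hv0 hp (hσ2 ▸ hσ2s.hasSum)
  calc ∑' k, p k * log (1 / p k)
      < -∑' k : ℤ, p k * cellLogMean (ProbabilityTheory.gaussianPDFReal μ v) k :=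
        tsum_mul_log_one_div_lt_of_density hp0 hp (continuous_gaussianPDFReal μ v)
          (fun x => ProbabilityTheory.gaussianPDFReal_pos μ v x hv0)
          (ProbabilityTheory.integrable_gaussianPDFReal μ v)
          (ProbabilityTheory.integral_gaussianPDFReal_eq_one μ hv0) hcross.summable
    _ = 1 / 2 * log (2 * π * exp 1 * v) := by
      rw [hcross.tsum_eq, ← hv, mul_right_comm _ (exp 1), log_mul (by positivity) (exp_ne_zero 1),
        log_exp]
      field_simp
      ring
end
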